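/- arXiv:2212.14175 — 2 statements merged into one kernel-verified Lean document; each statement's English description precedes it below -/
import Mathlib

section
/- Let u be a Schwartz function on ℝ³. For all m ∈ ℝ and r > 0, there exists a constant C > 0, depending only on m and r, such that ‖[(1-Δ)^{r/2}, ⟨·⟩^m] u‖_{L²(ℝ³)} ≤ C ‖⟨·⟩^m u‖_{H^{r-1}(ℝ³)}, where [A,B] = AB - BA denotes the commutator. -/
open MeasureTheory Real
open scoped FourierTransform SchwartzMap
noncomputable section
abbrev V := EuclideanSpace ℝ (Fin 3)
/-- Japanese bracket `⟨v⟩ = (1+|v|²)^{1/2}`. -/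
def jb (v : V) : ℝ := (1 + ‖v‖^2) ^ ((1:ℝ)/2)
/-- `L²` norm. -/
def l2norm (f : V → ℂ) : ℝ := (∫ v, ‖f v‖^2) ^ ((1:ℝ)/2)
/-- Sobolev `H^k` norm defined via the Fourier transform. -/
def Hnorm (k : ℝ) (f : V → ℂ) : ℝ := (∫ ξ, (jb ξ)^(2*k) * ‖𝓕 f ξ‖^2) ^ ((1:ℝ)/2)
/-- Weighted Sobolev norm `‖u‖_{H^k_l} = ‖⟨·⟩^l u‖_{H^k}`. -/
def HnormW (k l : ℝ) (f : V → ℂ) : ℝ := Hnorm k (fun v => ((jb v ^ l : ℝ) : ℂ) * f v)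
/-- The Fourier multiplier `(1-Δ)^{r/2} = ⟨D⟩^r` with symbol `(1+|ξ|²)^{r/2}`. -/
def besselOp (r : ℝ) (f : V → ℂ) : V → ℂ :=
  fun v => 𝓕⁻ (fun ξ => (((1 + ‖ξ‖^2) ^ (r/2) : ℝ) : ℂ) * 𝓕 f ξ) v

namespace CBW
open SchwartzMap

/-- `⟨ξ⟩^s`, real valued -/
def br (s : ℝ) (ξ : V) : ℝ := (1 + ‖ξ‖^2) ^ (s/2)
/-- `⟨ξ⟩^s`, complex valued -/
def brc (s : ℝ) (ξ : V) : ℂ := ((br s ξ : ℝ) : ℂ)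

lemma br_pos (s : ℝ) (ξ : V) : 0 < br s ξ := by unfold br; positivity
lemma br_zero (ξ : V) : br 0 ξ = 1 := by simp [br]
lemma br_add (s t : ℝ) (ξ : V) : br (s + t) ξ = br s ξ * br t ξ := by
  unfold br; rw [add_div, Real.rpow_add (by positivity)]
lemma br_two (ξ : V) : br 2 ξ = 1 + ‖ξ‖^2 := by simp [br]
lemma br_mono {s t : ℝ} (h : s ≤ t) (ξ : V) : br s ξ ≤ br t ξ := by
  unfold br
  exact Real.rpow_le_rpow_of_exponent_le (by nlinarith [sq_nonneg ‖ξ‖]) (by linarith)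
lemma br_ge_one {s : ℝ} (h : 0 ≤ s) (ξ : V) : 1 ≤ br s ξ := by
  rw [← br_zero ξ]; exact br_mono h ξ
lemma br_le_one {s : ℝ} (h : s ≤ 0) (ξ : V) : br s ξ ≤ 1 := by
  rw [← br_zero ξ]; exact br_mono h ξ
lemma br_neg_mul (s : ℝ) (ξ : V) : br (-s) ξ * br s ξ = 1 := by
  rw [← br_add]; simp [br_zero]
lemma norm_le_br (ξ : V) : ‖ξ‖ ≤ br 1 ξ := by
  have h : br 1 ξ * br 1 ξ = 1 + ‖ξ‖^2 := by rw [← br_add, ← br_two]; norm_num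
  nlinarith [br_pos 1 ξ, norm_nonneg ξ]
lemma coord_le_br (ξ : V) (j : Fin 3) : |ξ j| ≤ br 1 ξ :=
  (by simpa using PiLp.norm_apply_le ξ j : |ξ j| ≤ ‖ξ‖).trans (norm_le_br ξ)
lemma jb_rpow (m : ℝ) (v : V) : jb v ^ m = br m v := by
  unfold jb br
  rw [← Real.rpow_mul (by positivity)]; congr 1; ring

lemma br_htg (s : ℝ) : (br s).HasTemperateGrowth := by
  unfold br; exact Function.hasTemperateGrowth_one_add_norm_sq_rpow V (s/2)
lemma brc_htg (s : ℝ) : (brc s).HasTemperateGrowth := by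
  have := br_htg s
  unfold brc; fun_prop
lemma coord_htg (j : Fin 3) : (fun v : V => ((v j : ℝ) : ℂ)).HasTemperateGrowth := by
  have h : (fun v : V => v j).HasTemperateGrowth :=
    (EuclideanSpace.proj j : V →L[ℝ] ℝ).hasTemperateGrowth
  fun_prop

lemma br_continuous (s : ℝ) : Continuous (br s) := (br_htg s).1.continuous

/-- Peetre -/
lemma peetre (s : ℝ) (a b : V) : br s (a + b) ≤ 2 ^ (|s|/2) * br |s| b * br s a := by
  have key : ∀ a b : V, 1 + ‖a + b‖^2 ≤ 2 * (1 + ‖b‖^2) * (1 + ‖a‖^2) := by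
    intro a b
    have h := norm_add_le a b
    have h2 : ‖a + b‖^2 ≤ (‖a‖ + ‖b‖)^2 := by gcongr
    nlinarith [sq_nonneg (‖a‖ - ‖b‖), mul_nonneg (sq_nonneg ‖a‖) (sq_nonneg ‖b‖)]
  have pos : ∀ s : ℝ, 0 ≤ s → ∀ a b : V, br s (a + b) ≤ 2 ^ (s/2) * br s b * br s a := by
    intro s hs a b
    unfold br
    rw [← Real.mul_rpow (by positivity) (by positivity), ← Real.mul_rpow (by positivity) (by positivity)]
    exact Real.rpow_le_rpow (by positivity) (key a b) (by positivity)
  rcases le_total 0 s with hs | hs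
  · rw [abs_of_nonneg hs]; exact pos s hs a b
  · rw [abs_of_nonpos hs]
    have h := pos (-s) (by linarith) (a + b) (-b)
    simp only [add_neg_cancel_right] at h
    have hb : br (-s) (-b) = br (-s) b := by simp [br]
    rw [hb] at h
    have h1 := br_neg_mul s a
    have h2 := br_neg_mul s (a + b)
    have p1 := br_pos s a
    have p2 := br_pos s (a + b)
    calc br s (a + b) = br s (a + b) * (br (-s) a * br s a) := by rw [h1, mul_one]
      _ ≤ br s (a + b) * ((2 ^ (-s/2) * br (-s) b * br (-s) (a+b)) * br s a) := by gcongr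
      _ = 2 ^ (-s/2) * br (-s) b * br s a * (br (-s) (a+b) * br s (a+b)) := by ring
      _ = _ := by rw [h2, mul_one]

/-- Symbols -/
inductive Sym : ℝ → (V → ℂ) → Prop
  | bra (s : ℝ) : Sym s (brc s)
  | coord (s t : ℝ) (h : t = s + 1) (j : Fin 3) (p : V → ℂ) : Sym s p →
      Sym t (fun ξ => ((ξ j : ℝ) : ℂ) * p ξ)
  | smul (s : ℝ) (c : ℂ) (p : V → ℂ) : Sym s p → Sym s (fun ξ => c * p ξ)
  | add (s : ℝ) (p q : V → ℂ) : Sym s p → Sym s q → Sym s (fun ξ => p ξ + q ξ)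

lemma Sym.htg {s : ℝ} {p : V → ℂ} (h : Sym s p) : p.HasTemperateGrowth := by
  induction h with
  | bra s => exact brc_htg s
  | coord s t h j p hp ih => have := coord_htg j; fun_prop
  | smul s c p hp ih => fun_prop
  | add s p q hp hq ih1 ih2 => fun_prop

lemma Sym.bound {s : ℝ} {p : V → ℂ} (h : Sym s p) : ∃ C, 0 ≤ C ∧ ∀ ξ, ‖p ξ‖ ≤ C * br s ξ := by
  induction h with
  | bra s => exact ⟨1, by norm_num, fun ξ => by simp [brc, abs_of_pos (br_pos s ξ)]⟩
  | coord s t h j p hp ih =>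
    obtain ⟨C, hC, h1⟩ := ih
    refine ⟨C, hC, fun ξ => ?_⟩
    rw [h, br_add, norm_mul, Complex.norm_real, Real.norm_eq_abs]
    calc |ξ j| * ‖p ξ‖ ≤ br 1 ξ * (C * br s ξ) := by
          have := coord_le_br ξ j
          have := h1 ξ
          have := (br_pos 1 ξ).le
          gcongr
      _ = _ := by ring
  | smul s c p hp ih =>
    obtain ⟨C, hC, h1⟩ := ih
    refine ⟨‖c‖ * C, by positivity, fun ξ => ?_⟩
    rw [norm_mul, mul_assoc]
    gcongr; exact h1 ξ
  | add s p q hp hq ih1 ih2 =>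
    obtain ⟨C, hC, h1⟩ := ih1
    obtain ⟨D, hD, h2⟩ := ih2
    refine ⟨C + D, by positivity, fun ξ => (norm_add_le _ _).trans ?_⟩
    rw [add_mul]
    exact add_le_add (h1 ξ) (h2 ξ)

/-- the differential with partials `q` -/
def dL (q : Fin 3 → V → ℂ) (ξ : V) : V →L[ℝ] ℂ :=
  ∑ j, (EuclideanSpace.proj j : V →L[ℝ] ℝ).smulRight (q j ξ)

lemma dL_apply (q : Fin 3 → V → ℂ) (ξ η : V) : dL q ξ η = ∑ j, ((η j : ℝ) : ℂ) * q j ξ := by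
  simp [dL]

lemma Sym.zero (s : ℝ) : Sym s (fun _ => 0) := by
  simpa using Sym.smul s 0 _ (Sym.bra s)

lemma br_hasFDerivAt (s : ℝ) (ξ : V) : HasFDerivAt (brc s)
    (dL (fun j ξ => (s:ℂ) * (((ξ j : ℝ) : ℂ) * brc (s-2) ξ)) ξ) ξ := by
  have h1 : HasFDerivAt (fun ξ : V => 1 + ‖ξ‖^2) (2 • innerSL ℝ ξ) ξ := by
    have := (hasStrictFDerivAt_norm_sq ξ).hasFDerivAt
    exact this.const_add 1
  have h2 := h1.rpow_const (p := s/2) (Or.inl (by positivity))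
  have h3 := Complex.ofRealCLM.hasFDerivAt.comp ξ h2
  refine HasFDerivAt.congr_fderiv h3 ?_
  ext η
  simp only [dL_apply]
  simp [brc, br, PiLp.inner_apply, Fin.sum_univ_three]
  have : s / 2 - 1 = (s-2)/2 := by ring
  rw [this]
  ring

lemma Sym.deriv {s : ℝ} {p : V → ℂ} (h : Sym s p) : ∃ q : Fin 3 → V → ℂ,
    (∀ j, Sym (s - 1) (q j)) ∧ ∀ ξ, HasFDerivAt p (dL q ξ) ξ := by
  induction h with
  | bra s =>
    exact ⟨_, fun j => Sym.smul _ _ _ (Sym.coord (s-2) (s-1) (by ring) j _ (Sym.bra _)),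
      br_hasFDerivAt s⟩
  | coord s t h j p hp ih =>
    obtain ⟨q, hq, hd⟩ := ih
    refine ⟨fun k ξ => (if k = j then (1:ℂ) else 0) * p ξ + ((ξ j : ℝ) : ℂ) * q k ξ, fun k => ?_, fun ξ => ?_⟩
    · have : t - 1 = s := by rw [h]; ring
      rw [this]
      exact Sym.add _ _ _ (Sym.smul _ _ _ hp) (Sym.coord _ _ (by ring) _ _ (hq k))
    · have h1 : HasFDerivAt (fun ξ : V => ((ξ j : ℝ) : ℂ))
          (Complex.ofRealCLM.comp (EuclideanSpace.proj j : V →L[ℝ] ℝ)) ξ :=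
        (Complex.ofRealCLM.comp (EuclideanSpace.proj j : V →L[ℝ] ℝ)).hasFDerivAt
      refine (h1.mul (hd ξ)).congr_fderiv ?_
      ext η
      simp only [dL_apply, add_apply, smul_apply, smul_eq_mul]
      simp only [mul_add, Finset.sum_add_distrib, Finset.mul_sum]
      simp
      rw [add_comm]
      congr 1
      · ring
      · exact Finset.sum_congr rfl fun _ _ => by ring
  | smul s c p hp ih =>
    obtain ⟨q, hq, hd⟩ := ih
    refine ⟨fun k ξ => c * q k ξ, fun k => Sym.smul _ _ _ (hq k), fun ξ => ?_⟩
    refine ((hd ξ).const_mul c).congr_fderiv ?_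
    ext η
    simp only [dL_apply, smul_apply, smul_eq_mul, Finset.mul_sum]
    exact Finset.sum_congr rfl fun _ _ => by ring
  | add s p q hp hq ih1 ih2 =>
    obtain ⟨q1, hq1, hd1⟩ := ih1
    obtain ⟨q2, hq2, hd2⟩ := ih2
    refine ⟨fun k ξ => q1 k ξ + q2 k ξ, fun k => Sym.add _ _ _ (hq1 k) (hq2 k), fun ξ => ?_⟩
    refine ((hd1 ξ).add (hd2 ξ)).congr_fderiv ?_
    ext η
    simp only [dL_apply, add_apply, mul_add, Finset.sum_add_distrib]

/-- first-order estimate -/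
lemma Sym.diff1 {s : ℝ} {p : V → ℂ} (h : Sym s p) : ∃ C, 0 ≤ C ∧ ∀ ξ η,
    ‖p (ξ + η) - p ξ‖ ≤ C * ‖η‖ * br |s-1| η * br (s-1) ξ := by
  obtain ⟨q, hq, hd⟩ := h.deriv
  choose C hC hb using fun j => (hq j).bound
  refine ⟨∑ j, C j * 2 ^ (|s-1|/2), Finset.sum_nonneg fun j _ => mul_nonneg (hC j) (by positivity), fun ξ η => ?_⟩
  have hder : ∀ τ ∈ Set.Icc (0:ℝ) 1, HasDerivWithinAt (fun τ : ℝ => p (ξ + τ • η))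
      (dL q (ξ + τ • η) η) (Set.Icc 0 1) τ := by
    intro τ _
    have h1 : HasDerivAt (fun τ : ℝ => ξ + τ • η) η τ := by
      simpa using ((hasDerivAt_id τ).smul_const η).const_add ξ
    exact ((hd _).comp_hasDerivAt τ h1).hasDerivWithinAt
  have hbd : ∀ τ ∈ Set.Icc (0:ℝ) 1, ‖dL q (ξ + τ • η) η‖ ≤
      (∑ j, C j * 2 ^ (|s-1|/2)) * ‖η‖ * br |s-1| η * br (s-1) ξ := by
    intro τ hτ
    rw [dL_apply]
    refine (norm_sum_le _ _).trans ?_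
    simp only [Finset.sum_mul]
    refine Finset.sum_le_sum fun j _ => ?_
    rw [norm_mul, Complex.norm_real]
    have h1 : ‖η j‖ ≤ ‖η‖ := PiLp.norm_apply_le η j
    have h2 : br |s-1| (τ • η) ≤ br |s-1| η := by
      unfold br
      refine Real.rpow_le_rpow (by positivity) ?_ (by positivity)
      rw [norm_smul, Real.norm_of_nonneg hτ.1]
      have : τ * ‖η‖ ≤ ‖η‖ := by nlinarith [norm_nonneg η, hτ.2]
      have h0 : 0 ≤ τ * ‖η‖ := mul_nonneg hτ.1 (norm_nonneg η)
      gcongr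
    have h3 := peetre (s-1) ξ (τ • η)
    have p1 := br_pos (s-1) ξ
    have p2 := br_pos |s-1| η
    have hCj := hC j
    calc ‖η j‖ * ‖q j (ξ + τ • η)‖ ≤ ‖η‖ * (C j * br (s-1) (ξ + τ • η)) := by
          gcongr; exact hb j _
      _ ≤ ‖η‖ * (C j * (2 ^ (|s-1|/2) * br |s-1| η * br (s-1) ξ)) := by
          gcongr
          refine h3.trans ?_
          gcongr
      _ = _ := by ring
  have := (convex_Icc (0:ℝ) 1).norm_image_sub_le_of_norm_hasDerivWithin_le hder hbd
    (Set.left_mem_Icc.2 zero_le_one) (Set.right_mem_Icc.2 zero_le_one)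
  simpa using this

/-- second-order estimate -/
lemma Sym.diff2 {s : ℝ} {p : V → ℂ} (q : Fin 3 → V → ℂ)
    (hq : ∀ j, Sym (s - 1) (q j)) (hd : ∀ ξ, HasFDerivAt p (dL q ξ) ξ) : ∃ C, 0 ≤ C ∧ ∀ ξ η,
    ‖p (ξ + η) - p ξ - dL q ξ η‖ ≤ C * ‖η‖^2 * br |s-2| η * br (s-2) ξ := by
  choose C hC hb using fun j => (hq j).diff1
  refine ⟨∑ j, C j, Finset.sum_nonneg fun j _ => hC j, fun ξ η => ?_⟩
  have hs : s - 1 - 1 = s - 2 := by ring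
  rw [hs] at hb
  have hder : ∀ τ ∈ Set.Icc (0:ℝ) 1, HasDerivWithinAt (fun τ : ℝ => p (ξ + τ • η) - τ • dL q ξ η)
      (dL q (ξ + τ • η) η - dL q ξ η) (Set.Icc 0 1) τ := by
    intro τ _
    have h1 : HasDerivAt (fun τ : ℝ => ξ + τ • η) η τ := by
      simpa using ((hasDerivAt_id τ).smul_const η).const_add ξ
    have h2 : HasDerivAt (fun τ : ℝ => τ • dL q ξ η) (dL q ξ η) τ := by
      simpa using ((hasDerivAt_id τ).smul_const (dL q ξ η))
    exact (((hd _).comp_hasDerivAt τ h1).sub h2).hasDerivWithinAt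
  have hbd : ∀ τ ∈ Set.Icc (0:ℝ) 1, ‖dL q (ξ + τ • η) η - dL q ξ η‖ ≤
      (∑ j, C j) * ‖η‖^2 * br |s-2| η * br (s-2) ξ := by
    intro τ hτ
    rw [dL_apply, dL_apply, ← Finset.sum_sub_distrib]
    refine (norm_sum_le _ _).trans ?_
    simp only [Finset.sum_mul]
    refine Finset.sum_le_sum fun j _ => ?_
    rw [← mul_sub, norm_mul, Complex.norm_real]
    have h1 : ‖η j‖ ≤ ‖η‖ := PiLp.norm_apply_le η j
    have h4 : ‖τ • η‖ ≤ ‖η‖ := by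
      rw [norm_smul, Real.norm_of_nonneg hτ.1]
      nlinarith [norm_nonneg η, hτ.2]
    have h2 : br |s-2| (τ • η) ≤ br |s-2| η := by
      unfold br
      refine Real.rpow_le_rpow (by positivity) ?_ (by positivity)
      gcongr
    have p1 := br_pos (s-2) ξ
    have p2 := br_pos |s-2| η
    have p3 := br_pos |s-2| (τ • η)
    have hCj := hC j
    calc ‖η j‖ * ‖q j (ξ + τ • η) - q j ξ‖ ≤ ‖η‖ * (C j * ‖τ • η‖ * br |s-2| (τ • η) * br (s-2) ξ) := by
          gcongr; exact hb j _ _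
      _ ≤ ‖η‖ * (C j * ‖η‖ * br |s-2| η * br (s-2) ξ) := by
          gcongr
      _ = _ := by ring
  have := (convex_Icc (0:ℝ) 1).norm_image_sub_le_of_norm_hasDerivWithin_le hder hbd
    (Set.left_mem_Icc.2 zero_le_one) (Set.right_mem_Icc.2 zero_le_one)
  have e : p (ξ + η) - p ξ - dL q ξ η = p (ξ + η) - dL q ξ η - p ξ := by ring
  rw [e]
  simpa using this

/-- Fourier multiplier -/
abbrev Op (p : V → ℂ) : 𝓢(V, ℂ) →L[ℂ] 𝓢(V, ℂ) := fourierMultiplierCLM ℂ p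
/-- multiplication -/
abbrev Mu (p : V → ℂ) : 𝓢(V, ℂ) →L[ℂ] 𝓢(V, ℂ) := smulLeftCLM ℂ p

lemma Mu_apply {p : V → ℂ} (hp : p.HasTemperateGrowth) (f : 𝓢(V, ℂ)) (v : V) :
    Mu p f v = p v * f v := by
  simp [Mu, smulLeftCLM_apply_apply hp]

lemma fourier_Op (p : V → ℂ) (f : 𝓢(V, ℂ)) : 𝓕 (Op p f) = Mu p (𝓕 f) := by
  rw [Op, fourierMultiplierCLM_apply, FourierTransform.fourier_fourierInv_eq]

lemma fourier_Op_apply {p : V → ℂ} (hp : p.HasTemperateGrowth) (f : 𝓢(V, ℂ)) (ξ : V) :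
    𝓕 (Op p f) ξ = p ξ * 𝓕 f ξ := by
  rw [fourier_Op, Mu_apply hp]

/-- L2 norm -/
def n2 (f : 𝓢(V, ℂ)) : ℝ := ‖f.toLp 2 (volume : Measure V)‖

lemma n2_nonneg (f : 𝓢(V, ℂ)) : 0 ≤ n2 f := norm_nonneg _
lemma n2_clm (f : 𝓢(V, ℂ)) : n2 f = ‖toLpCLM ℂ ℂ 2 (volume : Measure V) f‖ := rfl
lemma n2_add (f g : 𝓢(V, ℂ)) : n2 (f + g) ≤ n2 f + n2 g := by
  simp only [n2_clm, map_add]; exact norm_add_le _ _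
lemma n2_sub (f g : 𝓢(V, ℂ)) : n2 (f - g) ≤ n2 f + n2 g := by
  simp only [n2_clm, map_sub]; exact norm_sub_le _ _
lemma n2_neg (f : 𝓢(V, ℂ)) : n2 (-f) = n2 f := by
  simp only [n2_clm, map_neg, norm_neg]
lemma n2_smul (c : ℂ) (f : 𝓢(V, ℂ)) : n2 (c • f) = ‖c‖ * n2 f := by
  simp only [n2_clm, map_smul, norm_smul]
lemma n2_sum {ι : Type*} (s : Finset ι) (f : ι → 𝓢(V, ℂ)) : n2 (∑ i ∈ s, f i) ≤ ∑ i ∈ s, n2 (f i) := by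
  simp only [n2_clm, map_sum]; exact norm_sum_le _ _

lemma n2_le {f g : 𝓢(V, ℂ)} {C : ℝ} (h : ∀ v, ‖f v‖ ≤ C * ‖g v‖) : n2 f ≤ C * n2 g := by
  refine Lp.norm_le_mul_norm_of_ae_le_mul ?_
  filter_upwards [f.coeFn_toLp 2 (volume : Measure V), g.coeFn_toLp 2 (volume : Measure V)] with v h1 h2
  rw [h1, h2]; exact h v

lemma n2_fourier (f : 𝓢(V, ℂ)) : n2 (𝓕 f) = n2 f := norm_fourier_toL2_eq f

lemma n2_Mu_le {p : V → ℂ} (hp : p.HasTemperateGrowth) {C : ℝ} (h : ∀ v, ‖p v‖ ≤ C) (f : 𝓢(V, ℂ)) :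
    n2 (Mu p f) ≤ C * n2 f := by
  refine n2_le fun v => ?_
  rw [Mu_apply hp, norm_mul]
  gcongr; exact h v

/-- Sobolev norm -/
def hn (s : ℝ) (f : 𝓢(V, ℂ)) : ℝ := n2 (Mu (brc s) (𝓕 f))

lemma hn_nonneg (s : ℝ) (f : 𝓢(V, ℂ)) : 0 ≤ hn s f := norm_nonneg _

lemma hn_mono {s t : ℝ} (h : s ≤ t) (f : 𝓢(V, ℂ)) : hn s f ≤ hn t f := by
  have : n2 (Mu (brc s) (𝓕 f)) ≤ 1 * n2 (Mu (brc t) (𝓕 f)) := by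
    refine n2_le fun v => ?_
    rw [Mu_apply (brc_htg s), Mu_apply (brc_htg t), norm_mul, norm_mul, one_mul]
    gcongr
    simpa [brc, abs_of_pos (br_pos _ _)] using br_mono h v
  rwa [one_mul] at this

lemma hn_Op {s : ℝ} {p : V → ℂ} (h : Sym s p) : ∃ C, 0 ≤ C ∧ ∀ f, n2 (Op p f) ≤ C * hn s f := by
  obtain ⟨C, hC, hb⟩ := h.bound
  refine ⟨C, hC, fun f => ?_⟩
  rw [← n2_fourier, fourier_Op]
  refine n2_le fun v => ?_
  rw [Mu_apply (brc_htg s), Mu_apply h.htg, norm_mul, norm_mul, ← mul_assoc]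
  gcongr
  simpa [brc, abs_of_pos (br_pos _ _)] using hb v

lemma Mu_Mu {p q : V → ℂ} (hp : p.HasTemperateGrowth) (hq : q.HasTemperateGrowth) (f : 𝓢(V, ℂ)) :
    Mu p (Mu q f) = Mu (fun v => p v * q v) f := by
  ext v
  rw [Mu_apply hp, Mu_apply hq, Mu_apply (by fun_prop), mul_assoc]

/-- Schur test, lintegral form -/
lemma schur_aux {X : Type*} [MeasurableSpace X] (ν : Measure X) [SFinite ν] (η : X → V)
    (hη : Measurable η) (κ : X → ENNReal) (hκ : Measurable κ) (h : V → ENNReal) (hh : Measurable h)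
    (F : V → ENNReal) (hF : ∀ ξ, F ξ ≤ ∫⁻ x, κ x * (h (ξ - η x) + h (ξ + η x)) ∂ν) :
    ∫⁻ ξ, F ξ ^ 2 ≤ 4 * (∫⁻ x, κ x ∂ν) ^ 2 * ∫⁻ ξ, h ξ ^ 2 := by
  set K := ∫⁻ x, κ x ∂ν with hK
  set H : V → X → ENNReal := fun ξ x => h (ξ - η x) + h (ξ + η x) with hH
  have hHm : Measurable (Function.uncurry H) := by
    simp only [hH, Function.uncurry_def]; fun_prop
  have cs : ∀ ξ, F ξ ^ 2 ≤ K * ∫⁻ x, κ x * H ξ x ^ 2 ∂ν := by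
    intro ξ
    have hHξ : Measurable (H ξ) := by simp only [hH]; fun_prop
    have h1 := ENNReal.lintegral_mul_le_Lp_mul_Lq ν (Real.HolderConjugate.two_two)
      (f := fun x => κ x ^ ((1:ℝ)/2)) (g := fun x => κ x ^ ((1:ℝ)/2) * H ξ x)
      (by fun_prop) (by fun_prop)
    have e1 : ∀ x, ((fun x => κ x ^ ((1:ℝ)/2)) * (fun x => κ x ^ ((1:ℝ)/2) * H ξ x)) x = κ x * H ξ x := by
      intro x
      simp only [Pi.mul_apply, ← mul_assoc]
      rw [← ENNReal.rpow_add_of_nonneg _ _ (by norm_num) (by norm_num)]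
      norm_num
    have e2 : ∀ x, (κ x ^ ((1:ℝ)/2)) ^ (2:ℝ) = κ x := by
      intro x; rw [← ENNReal.rpow_mul]; norm_num
    simp only [e1, ENNReal.mul_rpow_of_nonneg _ _ (zero_le_two (α := ℝ)), e2] at h1
    have h2 : F ξ ≤ K ^ ((1:ℝ)/2) * (∫⁻ x, κ x * H ξ x ^ (2:ℝ) ∂ν) ^ ((1:ℝ)/2) := (hF ξ).trans h1
    have h3 : F ξ ^ (2:ℝ) ≤ (K ^ ((1:ℝ)/2) * (∫⁻ x, κ x * H ξ x ^ (2:ℝ) ∂ν) ^ ((1:ℝ)/2)) ^ (2:ℝ) :=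
      ENNReal.rpow_le_rpow h2 zero_le_two
    rw [ENNReal.mul_rpow_of_nonneg _ _ zero_le_two, ← ENNReal.rpow_mul, ← ENNReal.rpow_mul] at h3
    norm_num at h3
    exact_mod_cast h3
  have inner : ∀ x, ∫⁻ ξ, H ξ x ^ 2 ≤ 4 * ∫⁻ ξ, h ξ ^ 2 := by
    intro x
    have p1 : ∀ ξ, H ξ x ^ 2 ≤ 2 * (h (ξ - η x) ^ 2 + h (ξ + η x) ^ 2) := by
      intro ξ
      have := ENNReal.rpow_add_le_mul_rpow_add_rpow (h (ξ - η x)) (h (ξ + η x)) (p := 2) (by norm_num)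
      norm_num at this
      exact_mod_cast this
    calc ∫⁻ ξ, H ξ x ^ 2 ≤ ∫⁻ ξ, 2 * (h (ξ - η x) ^ 2 + h (ξ + η x) ^ 2) := lintegral_mono p1
      _ = 2 * ((∫⁻ ξ, h (ξ - η x) ^ 2) + (∫⁻ ξ, h (ξ + η x) ^ 2)) := by
        rw [lintegral_const_mul _ (by fun_prop), lintegral_add_left (by fun_prop)]
      _ = 2 * ((∫⁻ ξ, h ξ ^ 2) + (∫⁻ ξ, h ξ ^ 2)) := by
        rw [lintegral_sub_right_eq_self (fun ξ => h ξ ^ 2), lintegral_add_right_eq_self (fun ξ => h ξ ^ 2)]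
      _ = _ := by ring
  calc ∫⁻ ξ, F ξ ^ 2 ≤ ∫⁻ ξ, K * ∫⁻ x, κ x * H ξ x ^ 2 ∂ν := lintegral_mono cs
    _ = K * ∫⁻ ξ, ∫⁻ x, κ x * H ξ x ^ 2 ∂ν := by
      rw [lintegral_const_mul]
      exact Measurable.lintegral_prod_right' (f := fun z : V × X => κ z.2 * (Function.uncurry H z) ^ 2) (by fun_prop)
    _ = K * ∫⁻ x, (∫⁻ ξ, κ x * H ξ x ^ 2) ∂ν := by
      rw [lintegral_lintegral_swap]
      exact (Measurable.aemeasurable (f := fun z : V × X => κ z.2 * (Function.uncurry H z) ^ 2) (by fun_prop))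
    _ ≤ K * ∫⁻ x, κ x * (4 * ∫⁻ ξ, h ξ ^ 2) ∂ν := by
      gcongr with x
      rw [lintegral_const_mul]
      · gcongr; exact inner x
      · simp only [hH]; fun_prop
    _ = _ := by rw [lintegral_mul_const _ hκ, ← hK]; ring

lemma n2_sq (f : 𝓢(V, ℂ)) : ENNReal.ofReal (n2 f ^ 2) = ∫⁻ v, ‖f v‖ₑ ^ 2 := by
  have h := f.memLp 2 (volume : Measure V)
  rw [n2, norm_toLp, ENNReal.ofReal_pow ENNReal.toReal_nonneg, ENNReal.ofReal_toReal h.eLpNorm_ne_top,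
    eLpNorm_eq_lintegral_rpow_enorm_toReal (by norm_num) (by norm_num)]
  rw [← ENNReal.rpow_natCast, ← ENNReal.rpow_mul]
  norm_num

lemma schur {X : Type*} [MeasurableSpace X] (ν : Measure X) [SFinite ν] (η : X → V)
    (hη : Measurable η) (κ : X → ℝ) (hκ : Measurable κ) (hκ0 : ∀ x, 0 ≤ κ x) (hκi : Integrable κ ν)
    (F H : 𝓢(V, ℂ))
    (hF : ∀ ξ, ‖F ξ‖ₑ ≤ ∫⁻ x, ENNReal.ofReal (κ x) * (‖H (ξ - η x)‖ₑ + ‖H (ξ + η x)‖ₑ) ∂ν) :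
    n2 F ≤ 2 * (∫ x, κ x ∂ν) * n2 H := by
  have h := schur_aux ν η hη (fun x => ENNReal.ofReal (κ x)) (by fun_prop) (fun ξ => ‖H ξ‖ₑ)
    (H.continuous.measurable.enorm) (fun ξ => ‖F ξ‖ₑ) hF
  rw [← n2_sq, ← n2_sq, ← ofReal_integral_eq_lintegral_ofReal hκi (Filter.Eventually.of_forall hκ0)] at h
  have hI : 0 ≤ ∫ x, κ x ∂ν := integral_nonneg hκ0
  have h4 : (4:ENNReal) = ENNReal.ofReal 4 := by simp
  rw [h4, ← ENNReal.ofReal_pow hI, ← ENNReal.ofReal_mul (by norm_num), ← ENNReal.ofReal_mul (by positivity),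
    ENNReal.ofReal_le_ofReal_iff (by have := n2_nonneg H; positivity)] at h
  have hH := n2_nonneg H
  refine le_of_sq_le_sq ?_ (by positivity)
  calc n2 F ^ 2 ≤ _ := h
    _ = _ := by ring

lemma fourier_mul_integral {X : Type*} [MeasurableSpace X] (ν : Measure X) [SFinite ν]
    (ψ : X → V → ℂ) (hm : Measurable (Function.uncurry ψ)) (a : X → ℝ) (ha : Integrable a ν)
    (hb : ∀ x v, ‖ψ x v‖ ≤ a x * br 2 v) (φ : V → ℂ) (hφ : φ.HasTemperateGrowth)
    (hrep : ∀ v, φ v = ∫ x, ψ x v ∂ν) (g : 𝓢(V, ℂ)) (ξ : V) :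
    Integrable (fun x => 𝓕 (fun v => ψ x v * g v) ξ) ν ∧
      𝓕 (Mu φ g) ξ = ∫ x, 𝓕 (fun v => ψ x v * g v) ξ ∂ν := by
  have hgi : Integrable (fun v => br 2 v * ‖g v‖) := by
    have := (Mu (brc 2) g).integrable (μ := volume).norm
    refine this.congr (Filter.Eventually.of_forall fun v => ?_)
    simp [Mu_apply (brc_htg 2), brc, abs_of_pos (br_pos 2 v)]
  have hprod : Integrable (fun z : X × V => 𝐞 (-(inner ℝ z.2 ξ)) • (ψ z.1 z.2 * g z.2)) (ν.prod volume) := by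
    refine (ha.mul_prod hgi).mono' ?_ (Filter.Eventually.of_forall fun z => ?_)
    · refine Measurable.aestronglyMeasurable ?_
      have h1 : Measurable fun z : X × V => ψ z.1 z.2 := hm
      have h2 : Measurable fun z : X × V => g z.2 := g.continuous.measurable.comp measurable_snd
      have h3 : Measurable fun z : X × V => ((𝐞 (-(inner ℝ z.2 ξ)) : Circle) : ℂ) := by
        have : Continuous fun v : V => ((𝐞 (-(inner ℝ v ξ)) : Circle) : ℂ) :=
          continuous_subtype_val.comp (Real.continuous_fourierChar.comp (by fun_prop))
        exact this.measurable.comp measurable_snd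
      simp only [Circle.smul_def, smul_eq_mul]
      exact h3.mul (h1.mul h2)
    · rw [Circle.norm_smul, norm_mul]
      calc _ ≤ (a z.1 * br 2 z.2) * ‖g z.2‖ := by gcongr; exact hb _ _
        _ = _ := by ring
  constructor
  · have := hprod.integral_prod_left
    simpa only [Real.fourier_eq] using this
  · rw [fourier_coe]
    simp only [Real.fourier_eq]
    rw [integral_integral_swap hprod]
    congr 1
    ext v
    rw [Mu_apply hφ, hrep, Circle.smul_def, ← integral_mul_const, ← integral_smul]
    rfl

lemma shift (g : 𝓢(V, ℂ)) (η ξ : V) :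
    𝓕 (fun v => Complex.exp (((2 * π * inner ℝ v η : ℝ) : ℂ) * Complex.I) * g v) ξ = 𝓕 g (ξ - η) := by
  rw [fourier_coe]
  simp only [Real.fourier_eq', smul_eq_mul]
  congr 1
  ext v
  rw [← mul_assoc, ← Complex.exp_add]
  congr 2
  rw [inner_sub_right]
  push_cast
  ring

lemma exp_int (g : 𝓢(V, ℂ)) (η : V) :
    Integrable (fun v => Complex.exp (((2 * π * inner ℝ v η : ℝ) : ℂ) * Complex.I) * g v) := by
  refine g.integrable.bdd_mul (c := 1) ?_ (Filter.Eventually.of_forall fun v => ?_)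
  · exact Continuous.aestronglyMeasurable (by fun_prop)
  · exact (Complex.norm_exp_ofReal_mul_I _).le

lemma fourier_lin (f g : V → ℂ) (hf : Integrable f) (hg : Integrable g) (a b : ℂ) (ξ : V) :
    𝓕 (fun v => a * f v + b * g v) ξ = a * 𝓕 f ξ + b * 𝓕 g ξ := by
  simp only [Real.fourier_eq]
  rw [← integral_const_mul, ← integral_const_mul, ← integral_add]
  · congr 1; ext v
    simp only [Circle.smul_def, smul_eq_mul]; ring
  · exact ((Real.fourierIntegral_convergent_iff ξ).2 hf).const_mul a
  · exact ((Real.fourierIntegral_convergent_iff ξ).2 hg).const_mul b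

lemma fourier_cos (g : 𝓢(V, ℂ)) (η ξ : V) :
    𝓕 (fun v => ((Real.cos (2 * π * inner ℝ v η) : ℝ) : ℂ) * g v) ξ
      = 1/2 * 𝓕 g (ξ - η) + 1/2 * 𝓕 g (ξ + η) := by
  have h2 := shift g (-η) ξ
  rw [sub_neg_eq_add] at h2
  rw [← shift g η ξ, ← h2, ← fourier_lin _ _ (exp_int g η) (exp_int g (-η))]
  refine congrArg (fun h : V → ℂ => 𝓕 h ξ) (funext fun v => ?_)
  rw [Complex.ofReal_cos, Complex.cos, inner_neg_right]
  push_cast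
  ring_nf

lemma fourier_sin (g : 𝓢(V, ℂ)) (η ξ : V) :
    𝓕 (fun v => ((Real.sin (2 * π * inner ℝ v η) : ℝ) : ℂ) * g v) ξ
      = -(Complex.I/2) * 𝓕 g (ξ - η) + (Complex.I/2) * 𝓕 g (ξ + η) := by
  have h2 := shift g (-η) ξ
  rw [sub_neg_eq_add] at h2
  rw [← shift g η ξ, ← h2, ← fourier_lin _ _ (exp_int g η) (exp_int g (-η))]
  refine congrArg (fun h : V → ℂ => 𝓕 h ξ) (funext fun v => ?_)
  rw [Complex.ofReal_sin, Complex.sin, inner_neg_right]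
  push_cast
  ring_nf

lemma cos_bound (v η : V) : |1 - Real.cos (2 * π * inner ℝ v η)| ≤ (4 * π^2 * ‖η‖^2) * br 2 v := by
  have h1 := Real.one_sub_sq_div_two_le_cos (x := 2 * π * inner ℝ v η)
  have h2 := Real.cos_le_one (2 * π * inner ℝ v η)
  have h3 : (inner ℝ v η)^2 ≤ ‖v‖^2 * ‖η‖^2 := by
    rw [← mul_pow, ← sq_abs]
    exact pow_le_pow_left₀ (abs_nonneg _) (abs_real_inner_le_norm v η) 2
  rw [abs_of_nonneg (by linarith), br_two]
  have : 0 ≤ π^2 * ‖η‖^2 := by positivity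
  have : 0 ≤ π^2 * (‖v‖^2 * ‖η‖^2) := by positivity
  have h4 : π^2 * (inner ℝ v η)^2 ≤ π^2 * (‖v‖^2 * ‖η‖^2) := by gcongr
  nlinarith

lemma sin_bound (v η : V) (j : Fin 3) :
    |2 * π * η j * Real.sin (2 * π * inner ℝ v η)| ≤ (4 * π^2 * ‖η‖^2) * br 2 v := by
  have h1 : |Real.sin (2 * π * inner ℝ v η)| ≤ 2 * π * (‖v‖ * ‖η‖) := by
    refine Real.abs_sin_le_abs.trans ?_
    rw [abs_mul, abs_of_pos Real.two_pi_pos]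
    gcongr; exact abs_real_inner_le_norm v η
  have h2 : |η j| ≤ ‖η‖ := by simpa using PiLp.norm_apply_le η j
  have h3 : ‖v‖ ≤ br 2 v := by rw [br_two]; nlinarith [sq_nonneg (‖v‖ - 1)]
  rw [abs_mul, abs_mul, abs_of_pos Real.two_pi_pos]
  calc _ ≤ 2 * π * ‖η‖ * (2 * π * (br 2 v * ‖η‖)) := by
        gcongr
        refine h1.trans ?_
        gcongr
    _ = _ := by ring

/-- the constant `1/(2πi)` -/
def kap : ℂ := 1 / (2 * π * Complex.I)

lemma Sym.coordDeriv_htg {s : ℝ} {q : V → ℂ} (hq : Sym s q) :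
    (fun ξ => kap * q ξ).HasTemperateGrowth := (Sym.smul s kap q hq).htg

/-- Abstract base estimate: second order commutator remainder. -/
lemma base_abs {X : Type*} [MeasurableSpace X] (ν : Measure X) [SFinite ν] (η : X → V)
    (hη : Measurable η) (hmom : ∀ M : ℝ, Integrable (fun x => ‖η x‖^2 * br M (η x)) ν)
    (φ : V → ℂ) (hφ : φ.HasTemperateGrowth)
    (hrep : ∀ v, φ v = ∫ x, ((1 - Real.cos (2 * π * inner ℝ v (η x)) : ℝ) : ℂ) ∂ν)
    (φ' : Fin 3 → V → ℂ) (hφ' : ∀ j, (φ' j).HasTemperateGrowth)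
    (hrep' : ∀ j v, φ' j v = ∫ x, ((2 * π * η x j * Real.sin (2 * π * inner ℝ v (η x)) : ℝ) : ℂ) ∂ν)
    {r : ℝ} {p : V → ℂ} (hp : Sym r p) (q : Fin 3 → V → ℂ)
    (hq : ∀ j, Sym (r - 1) (q j)) (hd : ∀ ξ, HasFDerivAt p (dL q ξ) ξ) :
    ∃ C, 0 ≤ C ∧ ∀ f : 𝓢(V, ℂ),
      n2 (Op p (Mu φ f) - Mu φ (Op p f) - ∑ j, Mu (φ' j) (Op (fun ξ => kap * q j ξ) f)) ≤ C * hn (r-2) f := by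
  obtain ⟨C, hC, hb⟩ := Sym.diff2 q hq hd
  have hκi : Integrable (fun x => C / 2 * (‖η x‖^2 * br |r-2| (η x))) ν := (hmom |r-2|).const_mul _
  refine ⟨2 * ∫ x, C / 2 * (‖η x‖^2 * br |r-2| (η x)) ∂ν, ?_, fun f => ?_⟩
  · refine mul_nonneg (by norm_num) (integral_nonneg fun x => ?_)
    have := br_pos |r-2| (η x)
    positivity
  rw [← n2_fourier]
  unfold hn
  have hbm : ∀ M, Measurable (fun x => br M (η x)) := fun M => (br_continuous M).measurable.comp hη
  have ha : Integrable (fun x => 4 * π^2 * ‖η x‖^2) ν := by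
    have := (hmom 0).const_mul (4 * π^2)
    simpa [br_zero, mul_assoc] using this
  have hm1 : Measurable (Function.uncurry fun x v => ((1 - Real.cos (2 * π * inner ℝ v (η x)) : ℝ) : ℂ)) := by
    simp only [Function.uncurry_def]; fun_prop
  have hm2 : ∀ j, Measurable (Function.uncurry fun x (v : V) => ((2 * π * η x j * Real.sin (2 * π * inner ℝ v (η x)) : ℝ) : ℂ)) := by
    intro j
    have : Measurable fun x => η x j := (EuclideanSpace.proj j : V →L[ℝ] ℝ).continuous.measurable.comp hη
    simp only [Function.uncurry_def]; fun_prop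
  have f1 := fun g ξ => fourier_mul_integral ν _ hm1 _ ha
    (fun x v => by rw [Complex.norm_real]; exact cos_bound v (η x)) φ hφ hrep g ξ
  have f2 := fun j g ξ => fourier_mul_integral ν _ (hm2 j) _ ha
    (fun x v => by rw [Complex.norm_real]; exact sin_bound v (η x) j) (φ' j) (hφ' j) (hrep' j) g ξ
  have e1 : ∀ (g : 𝓢(V, ℂ)) (x : X) (ξ : V),
      𝓕 (fun v => ((1 - Real.cos (2 * π * inner ℝ v (η x)) : ℝ) : ℂ) * g v) ξ
        = 𝓕 g ξ - (1/2 * 𝓕 g (ξ - η x) + 1/2 * 𝓕 g (ξ + η x)) := by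
    intro g x ξ
    rw [← fourier_cos]
    have := fourier_lin g (fun v => ((Real.cos (2 * π * inner ℝ v (η x)) : ℝ) : ℂ) * g v) g.integrable
      (g.integrable.bdd_mul (c := 1) (Continuous.aestronglyMeasurable (by fun_prop))
        (Filter.Eventually.of_forall fun v => by
          rw [Complex.norm_real]; exact Real.abs_cos_le_one _)) 1 (-1) ξ
    rw [fourier_coe]
    convert this using 1
    · refine congrArg (fun h : V → ℂ => 𝓕 h ξ) (funext fun v => ?_)
      push_cast; ring
    · ring
  have e2 : ∀ (j : Fin 3) (g : 𝓢(V, ℂ)) (x : X) (ξ : V),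
      𝓕 (fun v => ((2 * π * η x j * Real.sin (2 * π * inner ℝ v (η x)) : ℝ) : ℂ) * g v) ξ
        = ((2 * π * η x j : ℝ) : ℂ) * (-(Complex.I/2) * 𝓕 g (ξ - η x) + (Complex.I/2) * 𝓕 g (ξ + η x)) := by
    intro j g x ξ
    rw [← fourier_sin]
    have := fourier_lin (fun v => ((Real.sin (2 * π * inner ℝ v (η x)) : ℝ) : ℂ) * g v) 0
      (g.integrable.bdd_mul (c := 1) (Continuous.aestronglyMeasurable (by fun_prop))
        (Filter.Eventually.of_forall fun v => by
          rw [Complex.norm_real]; exact Real.abs_sin_le_one _)) (integrable_zero _ _ _)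
          ((2 * π * η x j : ℝ) : ℂ) 0 ξ
    convert this using 1
    · refine congrArg (fun h : V → ℂ => 𝓕 h ξ) (funext fun v => ?_)
      push_cast; simp only [Pi.zero_apply]; ring
    · ring
  have hqk := fun j => (hq j).coordDeriv_htg
  refine schur ν η hη _ ?_ ?_ hκi _ _ fun ξ => ?_
  · have := hbm |r-2|
    fun_prop
  · intro x
    have := br_pos |r-2| (η x)
    positivity
  have key : 𝓕 (Op p (Mu φ f) - Mu φ (Op p f) - ∑ j, Mu (φ' j) (Op (fun ξ => kap * q j ξ) f)) ξ
      = ∫ x, (p ξ * (𝓕 f ξ - (1/2 * 𝓕 f (ξ - η x) + 1/2 * 𝓕 f (ξ + η x)))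
          - (𝓕 (Op p f) ξ - (1/2 * 𝓕 (Op p f) (ξ - η x) + 1/2 * 𝓕 (Op p f) (ξ + η x)))
          - ∑ j, ((2 * π * η x j : ℝ) : ℂ) * (-(Complex.I/2) * 𝓕 (Op (fun ξ => kap * q j ξ) f) (ξ - η x)
            + (Complex.I/2) * 𝓕 (Op (fun ξ => kap * q j ξ) f) (ξ + η x))) ∂ν := by
    have hF : ∀ a b : 𝓢(V, ℂ), 𝓕 (a - b) = 𝓕 a - 𝓕 b := fun a b => map_sub (FourierTransform.fourierCLM ℂ 𝓢(V, ℂ)) a b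
    have hS : ∀ a : Fin 3 → 𝓢(V, ℂ), 𝓕 (∑ j, a j) = ∑ j, 𝓕 (a j) := fun a => map_sum (FourierTransform.fourierCLM ℂ 𝓢(V, ℂ)) a _
    rw [hF, hF, hS, sub_apply, sub_apply, sum_apply,
      fourier_Op_apply hp.htg, (f1 f ξ).2, (f1 (Op p f) ξ).2]
    simp only [(f2 _ _ ξ).2]
    simp only [e1, e2]
    have i1 := (f1 f ξ).1
    have i2 := (f1 (Op p f) ξ).1
    have i3 := fun j => (f2 j (Op (fun ξ => kap * q j ξ) f) ξ).1
    simp only [e1, e2] at i1 i2 i3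
    have i12 : Integrable (fun x => p ξ * (𝓕 f ξ - (1/2 * 𝓕 f (ξ - η x) + 1/2 * 𝓕 f (ξ + η x)))
          - (𝓕 (Op p f) ξ - (1/2 * 𝓕 (Op p f) (ξ - η x) + 1/2 * 𝓕 (Op p f) (ξ + η x)))) ν :=
      (i1.const_mul (p ξ)).sub i2
    rw [integral_sub i12 (integrable_finsetSum _ fun j _ => i3 j),
      integral_sub (i1.const_mul _) i2, integral_const_mul, integral_finsetSum _ fun j _ => i3 j]
  rw [key]
  refine (enorm_integral_le_lintegral_enorm _).trans (lintegral_mono fun x => ?_)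
  set a := η x with ha'
  have r1 : ∀ g ξ', 𝓕 (Op p g) ξ' = p ξ' * 𝓕 g ξ' := fun g ξ' => fourier_Op_apply hp.htg g ξ'
  have r2 : ∀ j g ξ', 𝓕 (Op (fun ξ => kap * q j ξ) g) ξ' = kap * q j ξ' * 𝓕 g ξ' :=
    fun j g ξ' => fourier_Op_apply (hqk j) g ξ'
  have hk : (π : ℂ) * Complex.I * kap = 1/2 := by
    have : (π : ℂ) ≠ 0 := by exact_mod_cast Real.pi_ne_zero
    unfold kap; field_simp
  have alg : (p ξ * (𝓕 f ξ - (1/2 * 𝓕 f (ξ - a) + 1/2 * 𝓕 f (ξ + a)))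
          - (𝓕 (Op p f) ξ - (1/2 * 𝓕 (Op p f) (ξ - a) + 1/2 * 𝓕 (Op p f) (ξ + a)))
          - ∑ j, ((2 * π * a j : ℝ) : ℂ) * (-(Complex.I/2) * 𝓕 (Op (fun ξ => kap * q j ξ) f) (ξ - a)
            + (Complex.I/2) * 𝓕 (Op (fun ξ => kap * q j ξ) f) (ξ + a)))
      = -(1/2) * (p ((ξ - a) + a) - p (ξ - a) - dL q (ξ - a) a) * 𝓕 f (ξ - a)
        + -(1/2) * (p ((ξ + a) + (-a)) - p (ξ + a) - dL q (ξ + a) (-a)) * 𝓕 f (ξ + a) := by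
    have s1 : ∀ j, ((2 * π * a j : ℝ) : ℂ) * (-(Complex.I/2) * 𝓕 (Op (fun ξ => kap * q j ξ) f) (ξ - a)
            + (Complex.I/2) * 𝓕 (Op (fun ξ => kap * q j ξ) f) (ξ + a))
        = -(1/2) * 𝓕 f (ξ - a) * (((a j : ℝ) : ℂ) * q j (ξ - a))
          + (1/2) * 𝓕 f (ξ + a) * (((a j : ℝ) : ℂ) * q j (ξ + a)) := by
      intro j
      rw [r2, r2, ← hk]
      push_cast
      ring
    simp only [s1, Finset.sum_add_distrib, ← Finset.mul_sum, map_neg, ← dL_apply, r1,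
      sub_add_cancel, add_neg_cancel_right]
    ring
  rw [alg]
  have hW : ∀ ζ, ‖Mu (brc (r-2)) (𝓕 f) ζ‖ = br (r-2) ζ * ‖𝓕 f ζ‖ := by
    intro ζ
    rw [Mu_apply (brc_htg _), norm_mul, brc, Complex.norm_real, Real.norm_of_nonneg (br_pos _ _).le]
  rw [← ofReal_norm, ← ofReal_norm, ← ofReal_norm,
    ← ENNReal.ofReal_add (norm_nonneg _) (norm_nonneg _), ← ENNReal.ofReal_mul]
  · refine ENNReal.ofReal_le_ofReal ?_
    rw [hW, hW]
    refine (norm_add_le _ _).trans ?_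
    rw [norm_mul, norm_mul, norm_mul, norm_mul]
    have b1 := hb (ξ - a) a
    have b2 := hb (ξ + a) (-a)
    have hbn : br |r-2| (-a) = br |r-2| a := by simp [br]
    rw [norm_neg, hbn] at b2
    have hh : ‖(-(1/2) : ℂ)‖ = 1/2 := by norm_num
    rw [hh]
    calc _ ≤ 1/2 * (C * ‖a‖^2 * br |r-2| a * br (r-2) (ξ - a)) * ‖𝓕 f (ξ - a)‖
          + 1/2 * (C * ‖a‖^2 * br |r-2| a * br (r-2) (ξ + a)) * ‖𝓕 f (ξ + a)‖ := by gcongr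
      _ = _ := by ring
  · have := br_pos |r-2| a
    positivity

/-- Abstract multiplier estimate on Sobolev spaces. -/
lemma nice_abs {X : Type*} [MeasurableSpace X] (ν : Measure X) [SFinite ν] (η : X → V)
    (hη : Measurable η) (c : X → ℝ) (hc : Measurable c)
    (hmom : ∀ M : ℝ, Integrable (fun x => |c x| * br M (η x)) ν)
    (T : X → V → ℝ) (hT : Measurable (Function.uncurry T)) (hT1 : ∀ x v, |T x v| ≤ 1)
    (a1 a2 : ℂ) (ha1 : ‖a1‖ ≤ 1) (ha2 : ‖a2‖ ≤ 1)
    (hTF : ∀ (g : 𝓢(V, ℂ)) x ξ, 𝓕 (fun v => ((T x v : ℝ) : ℂ) * g v) ξ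
      = a1 * 𝓕 g (ξ - η x) + a2 * 𝓕 g (ξ + η x))
    (χ : V → ℂ) (hχ : χ.HasTemperateGrowth)
    (hrep : ∀ v, χ v = ∫ x, ((c x * T x v : ℝ) : ℂ) ∂ν) (s : ℝ) :
    ∃ C, 0 ≤ C ∧ ∀ f : 𝓢(V, ℂ), hn s (Mu χ f) ≤ C * hn s f := by
  have hκi : Integrable (fun x => 2 ^ (|s|/2) * (|c x| * br |s| (η x))) ν := (hmom |s|).const_mul _
  have hκ0 : ∀ x, 0 ≤ 2 ^ (|s|/2) * (|c x| * br |s| (η x)) := fun x => by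
    have := br_pos |s| (η x)
    positivity
  refine ⟨2 * ∫ x, 2 ^ (|s|/2) * (|c x| * br |s| (η x)) ∂ν,
    mul_nonneg (by norm_num) (integral_nonneg hκ0), fun f => ?_⟩
  unfold hn
  have hbm : ∀ M, Measurable (fun x => br M (η x)) := fun M => (br_continuous M).measurable.comp hη
  have ha : Integrable (fun x => |c x|) ν := by
    simpa [br_zero] using hmom 0
  have hTm : Measurable fun z : X × V => T z.1 z.2 := hT
  have hm1 : Measurable (Function.uncurry fun x v => ((c x * T x v : ℝ) : ℂ)) := by
    simp only [Function.uncurry_def]; fun_prop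
  have f1 := fun ξ => fourier_mul_integral ν _ hm1 _ ha
    (fun x v => by
      rw [Complex.norm_real, Real.norm_eq_abs, abs_mul]
      exact mul_le_mul_of_nonneg_left ((hT1 x v).trans (br_ge_one (by norm_num) v)) (abs_nonneg _))
      χ hχ hrep f ξ
  have e1 : ∀ (x : X) (ξ : V), 𝓕 (fun v => ((c x * T x v : ℝ) : ℂ) * f v) ξ
      = (c x : ℂ) * (a1 * 𝓕 f (ξ - η x) + a2 * 𝓕 f (ξ + η x)) := by
    intro x ξ
    rw [← hTF]
    simp only [Real.fourier_eq]
    rw [← integral_const_mul]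
    congr 1; ext v
    simp only [Circle.smul_def, smul_eq_mul]; push_cast; ring
  refine schur ν η hη _ ?_ hκ0 hκi _ _ fun ξ => ?_
  · have := hbm |s|
    have : Measurable fun x => |c x| := hc.abs
    fun_prop
  have hW : ∀ ζ, ‖Mu (brc s) (𝓕 f) ζ‖ = br s ζ * ‖𝓕 f ζ‖ := by
    intro ζ
    rw [Mu_apply (brc_htg _), norm_mul, brc, Complex.norm_real, Real.norm_of_nonneg (br_pos _ _).le]
  rw [Mu_apply (brc_htg _), (f1 ξ).2, ← integral_const_mul]
  refine (enorm_integral_le_lintegral_enorm _).trans (lintegral_mono fun x => ?_)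
  simp only [e1]
  rw [← ofReal_norm, ← ofReal_norm, ← ofReal_norm,
    ← ENNReal.ofReal_add (norm_nonneg _) (norm_nonneg _), ← ENNReal.ofReal_mul (hκ0 x)]
  refine ENNReal.ofReal_le_ofReal ?_
  rw [hW, hW, norm_mul, norm_mul, brc, Complex.norm_real, Complex.norm_real,
    Real.norm_of_nonneg (br_pos _ _).le, Real.norm_eq_abs]
  have p1 := peetre s (ξ - η x) (η x)
  have p2 := peetre s (ξ + η x) (-η x)
  have hbn : br |s| (-η x) = br |s| (η x) := by simp [br]
  rw [sub_add_cancel] at p1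
  rw [add_neg_cancel_right, hbn] at p2
  have h0 := br_pos s ξ
  calc _ ≤ br s ξ * (|c x| * (1 * ‖𝓕 f (ξ - η x)‖ + 1 * ‖𝓕 f (ξ + η x)‖)) := by
        gcongr
        refine (norm_add_le _ _).trans ?_
        rw [norm_mul, norm_mul]
        gcongr
    _ = |c x| * (br s ξ * ‖𝓕 f (ξ - η x)‖ + br s ξ * ‖𝓕 f (ξ + η x)‖) := by ring
    _ ≤ |c x| * ((2 ^ (|s| / 2) * br |s| (η x) * br s (ξ - η x)) * ‖𝓕 f (ξ - η x)‖
          + (2 ^ (|s| / 2) * br |s| (η x) * br s (ξ + η x)) * ‖𝓕 f (ξ + η x)‖) := by gcongr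
    _ = _ := by ring

/-- Gaussian -/
def gam (ζ : V) : ℝ := Real.exp (-π * ‖ζ‖^2)

lemma gam_pos (ζ : V) : 0 < gam ζ := Real.exp_pos _
lemma gam_cont : Continuous gam := by unfold gam; fun_prop

lemma pow_gam_int (N : ℕ) : Integrable (fun ζ : V => (1 + ‖ζ‖^2)^N * gam ζ) := by
  have h := (integrable_rpow_neg_one_add_norm_sq (E := V) (μ := volume) (r := 4) (by simp; norm_num)).const_mul
    ((N+2).factorial * Real.exp 1)
  refine h.mono' (Continuous.aestronglyMeasurable (by have := gam_cont; fun_prop)) (Filter.Eventually.of_forall fun ζ => ?_)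
  have hg := gam_pos ζ
  rw [Real.norm_of_nonneg (by positivity)]
  set t := ‖ζ‖^2 with ht
  have ht0 : 0 ≤ t := by positivity
  have h1 : (1 + t)^(N+2) ≤ (N+2).factorial * Real.exp (1 + t) := by
    have := Real.pow_div_factorial_le_exp (1+t) (by positivity) (N+2)
    rwa [div_le_iff₀ (by positivity), mul_comm] at this
  have h2 : Real.exp (1 + t) * gam ζ ≤ Real.exp 1 := by
    rw [gam, ← Real.exp_add]
    apply Real.exp_le_exp.2
    nlinarith [Real.pi_gt_three]
  have h3 : (1 + t) ^ ((-4:ℝ)/2) = ((1+t)^2)⁻¹ := by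
    rw [show ((-4:ℝ)/2) = -(2:ℕ) by norm_num, Real.rpow_neg (by positivity), Real.rpow_natCast]
  rw [h3, ← div_eq_mul_inv, le_div_iff₀ (by positivity)]
  calc _ = (1+t)^(N+2) * gam ζ := by ring
    _ ≤ (N+2).factorial * Real.exp (1 + t) * gam ζ := by gcongr
    _ = (N+2).factorial * (Real.exp (1 + t) * gam ζ) := by ring
    _ ≤ _ := by gcongr

lemma pow_exp_int (N : ℕ) : ∀ a : ℝ, -1 < a →
    IntegrableOn (fun s : ℝ => s^a * (1 + s^2)^N * Real.exp (-π * s^2)) (Set.Ioi 0) := by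
  induction N with
  | zero => intro a ha; simpa using integrableOn_rpow_mul_exp_neg_mul_sq Real.pi_pos ha
  | succ N ih =>
    intro a ha
    refine ((ih a ha).add (ih (a+2) (by linarith))).congr_fun (fun s hs => ?_) measurableSet_Ioi
    have : s^(a+2) = s^a * s^2 := by rw [Real.rpow_add hs]; norm_num
    simp only [Pi.add_apply, this]; ring

lemma fourier_gam (x : V) : 𝓕 (fun ζ : V => ((gam ζ : ℝ) : ℂ)) x = ((gam x : ℝ) : ℂ) := by
  have := fourier_gaussian_innerProductSpace (V := V) (b := (π : ℂ)) (by simpa using Real.pi_pos) x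
  have e : (fun ζ : V => ((gam ζ : ℝ) : ℂ)) = fun v : V => Complex.exp (-(π : ℂ) * ‖v‖^2) := by
    ext v; simp [gam]
  rw [e, this]
  have hp : (π : ℂ) ≠ 0 := by exact_mod_cast Real.pi_ne_zero
  rw [div_self hp, Complex.one_cpow, one_mul, gam]
  push_cast
  congr 1
  field_simp

lemma gam_int : Integrable gam := by simpa using pow_gam_int 0
lemma norm_gam_int : Integrable (fun ζ : V => ‖ζ‖ * gam ζ) := by
  refine (pow_gam_int 1).mono' (Continuous.aestronglyMeasurable (by have := gam_cont; fun_prop)) (Filter.Eventually.of_forall fun ζ => ?_)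
  have := gam_pos ζ
  rw [Real.norm_of_nonneg (by positivity), pow_one]
  gcongr
  nlinarith [sq_nonneg (‖ζ‖ - 1)]

lemma gam_cos (x : V) : ∫ ζ, Real.cos (2 * π * inner ℝ x ζ) * gam ζ = gam x := by
  have h := congrArg Complex.re (fourier_gam x)
  rw [Real.fourier_eq', Complex.ofReal_re] at h
  rw [← h]
  have hi : Integrable (fun v : V => Complex.exp (((-2 * π * inner ℝ v x : ℝ) : ℂ) * Complex.I) • ((gam v : ℝ) : ℂ)) := by
    refine gam_int.ofReal.bdd_mul (c := 1) (Continuous.aestronglyMeasurable (by fun_prop)) (Filter.Eventually.of_forall fun v => ?_)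
    exact (Complex.norm_exp_ofReal_mul_I _).le
  have := integral_re (𝕜 := ℂ) hi
  simp only [RCLike.re_eq_complex_re] at this
  rw [← this]
  congr 1; ext v
  rw [smul_eq_mul, Complex.re_mul_ofReal, Complex.exp_ofReal_mul_I_re, real_inner_comm]
  congr 1
  rw [← Real.cos_neg]; congr 1; ring

lemma gam_sin (x : V) (j : Fin 3) : ∫ ζ, ζ j * Real.sin (2 * π * inner ℝ x ζ) * gam ζ = x j * gam x := by
  set e : V := EuclideanSpace.single j 1 with he
  have hin : ∀ ζ : V, inner ℝ e ζ = ζ j := fun ζ => by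
    simp [he, EuclideanSpace.inner_single_left]
  have hin' : ∀ ζ : V, inner ℝ ζ e = ζ j := fun ζ => by rw [real_inner_comm, hin]
  have hcj : Continuous fun ζ : V => ζ j := (EuclideanSpace.proj j : V →L[ℝ] ℝ).continuous
  have hd := (hasDerivAt_integral_of_dominated_loc_of_deriv_le (μ := (volume : Measure V)) (s := Set.univ) (x₀ := (0:ℝ))
    (F := fun t ζ => Real.cos (2 * π * inner ℝ (x + t • e) ζ) * gam ζ)
    (F' := fun t ζ => -(2 * π * (ζ j * Real.sin (2 * π * inner ℝ (x + t • e) ζ) * gam ζ)))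
    (bound := fun ζ => 2 * π * (‖ζ‖ * gam ζ)) Filter.univ_mem
    (Filter.Eventually.of_forall fun t => Continuous.aestronglyMeasurable (by have := gam_cont; fun_prop))
    ?_ (Continuous.aestronglyMeasurable (by have := gam_cont; fun_prop))
    (Filter.Eventually.of_forall fun ζ t _ => ?_) (norm_gam_int.const_mul _)
    (Filter.Eventually.of_forall fun ζ t _ => ?_)).2
  · simp only [gam_cos] at hd
    have hg : HasDerivAt (fun t : ℝ => gam (x + t • e)) (-(2 * π * (x j * gam x))) 0 := by
      have h1 : HasDerivAt (fun t : ℝ => x + t • e) e 0 := by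
        simpa using ((hasDerivAt_id (0:ℝ)).smul_const e).const_add x
      have h2 := ((h1.norm_sq).const_mul (-π)).exp
      have h3 := h2.congr_deriv (g' := -(2 * π * (x j * gam x))) (by
        simp only [zero_smul, add_zero, hin', gam]; ring)
      exact h3
    have := hd.unique hg
    rw [integral_neg, integral_const_mul] at this
    simp only [zero_smul, add_zero] at this
    have hp : 2 * π ≠ 0 := by positivity
    exact mul_left_cancel₀ hp (neg_injective this)
  · refine gam_int.bdd_mul (c := 1) (Continuous.aestronglyMeasurable (by fun_prop)) (Filter.Eventually.of_forall fun v => ?_)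
    exact Real.abs_cos_le_one _
  · have := gam_pos ζ
    have h2 : |ζ j| ≤ ‖ζ‖ := by simpa using PiLp.norm_apply_le ζ j
    rw [norm_neg, norm_mul, Real.norm_of_nonneg (by positivity), norm_mul, norm_mul, Real.norm_of_nonneg this.le,
      Real.norm_eq_abs, Real.norm_eq_abs]
    gcongr
    calc _ ≤ ‖ζ‖ * 1 := by gcongr; exact Real.abs_sin_le_one _
      _ = _ := mul_one _
  · have h1 : HasDerivAt (fun t : ℝ => 2 * π * inner ℝ (x + t • e) ζ) (2 * π * ζ j) t := by
      have : ∀ t : ℝ, 2 * π * inner ℝ (x + t • e) ζ = 2 * π * inner ℝ x ζ + t * (2 * π * ζ j) := by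
        intro t; rw [inner_add_left, inner_smul_left, hin]; simp; ring
      simp only [this]
      simpa using ((hasDerivAt_id t).mul_const (2 * π * ζ j)).const_add (2 * π * inner ℝ x ζ)
    exact (h1.cos.mul_const (gam ζ)).congr_deriv (by ring)

/-- radial measure -/
def nu1 (q : ℝ) : Measure ℝ :=
  (volume.restrict (Set.Ioi 0)).withDensity (fun s => ENNReal.ofReal (s^q * Real.exp (-π * s^2)))
/-- Gaussian measure -/
def nu2 : Measure V := volume.withDensity (fun ζ => ENNReal.ofReal (gam ζ))

instance (q : ℝ) : SFinite (nu1 q) := by unfold nu1; infer_instance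
instance : SFinite nu2 := by unfold nu2; infer_instance

lemma nu1_meas (q : ℝ) : Measurable fun s : ℝ => ENNReal.ofReal (s^q * Real.exp (-π * s^2)) := by fun_prop

lemma nu1_integral (q : ℝ) (f : ℝ → ℝ) :
    ∫ s, f s ∂(nu1 q) = ∫ s in Set.Ioi 0, s^q * Real.exp (-π * s^2) * f s := by
  rw [nu1, integral_withDensity_eq_integral_toReal_smul (nu1_meas q) (by simp)]
  refine setIntegral_congr_fun measurableSet_Ioi fun s hs => ?_
  have : (0:ℝ) < s := hs
  simp only [smul_eq_mul]
  rw [ENNReal.toReal_ofReal (by positivity)]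

lemma nu1_integrable (q : ℝ) (f : ℝ → ℝ)
    (h : IntegrableOn (fun s => s^q * Real.exp (-π * s^2) * f s) (Set.Ioi 0)) : Integrable f (nu1 q) := by
  rw [nu1, integrable_withDensity_iff_integrable_smul' (nu1_meas q) (by simp)]
  refine IntegrableOn.congr_fun h (fun s hs => ?_) measurableSet_Ioi
  have : (0:ℝ) < s := hs
  simp only [smul_eq_mul]
  rw [ENNReal.toReal_ofReal (by positivity)]

lemma nu2_meas : Measurable fun ζ : V => ENNReal.ofReal (gam ζ) := by
  have := gam_cont.measurable
  fun_prop

lemma nu2_integral (f : V → ℝ) : ∫ ζ, f ζ ∂nu2 = ∫ ζ, gam ζ * f ζ := by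
  rw [nu2, integral_withDensity_eq_integral_toReal_smul nu2_meas (by simp)]
  simp only [smul_eq_mul, ENNReal.toReal_ofReal (gam_pos _).le]

lemma nu2_integrable (f : V → ℝ) (h : Integrable (fun ζ => gam ζ * f ζ)) : Integrable f nu2 := by
  rw [nu2, integrable_withDensity_iff_integrable_smul' nu2_meas (by simp)]
  simpa only [smul_eq_mul, ENNReal.toReal_ofReal (gam_pos _).le] using h

/-- product measure -/
abbrev nu (q : ℝ) : Measure (ℝ × V) := (nu1 q).prod nu2

/-- frequency -/
def eta (x : ℝ × V) : V := x.1 • x.2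
lemma eta_meas : Measurable eta := by unfold eta; fun_prop

lemma nu_integrable {q : ℝ} {a N : ℕ} (hq : -1 < q + a) (K : ℝ) (F : ℝ × V → ℝ) (hF : Measurable F)
    (hb : ∀ s ζ, |F (s, ζ)| ≤ K * (s^a * (1 + s^2)^N) * (1 + ‖ζ‖^2)^N) : Integrable F (nu q) := by
  have h1 : Integrable (fun s : ℝ => K * (s^a * (1 + s^2)^N)) (nu1 q) := by
    refine (nu1_integrable q _ ?_).const_mul K
    refine (pow_exp_int N (q + a) hq).congr_fun (fun s hs => ?_) measurableSet_Ioi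
    have : (0:ℝ) < s := hs
    simp only
    rw [Real.rpow_add this, Real.rpow_natCast]; ring
  have h2 : Integrable (fun ζ : V => (1 + ‖ζ‖^2)^N) nu2 :=
    nu2_integrable _ ((pow_gam_int N).congr (Filter.Eventually.of_forall fun ζ => mul_comm _ _))
  exact (h1.mul_prod h2).mono' hF.aestronglyMeasurable (Filter.Eventually.of_forall fun z => hb z.1 z.2)

lemma nu_integral {q : ℝ} (F : ℝ × V → ℝ) (hF : Integrable F (nu q)) (G : ℝ → ℝ)
    (hG : ∀ s, 0 < s → ∫ ζ, gam ζ * F (s, ζ) = G s) :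
    ∫ x, F x ∂(nu q) = ∫ s in Set.Ioi 0, s^q * Real.exp (-π * s^2) * G s := by
  rw [integral_prod _ hF, nu1_integral]
  refine setIntegral_congr_fun measurableSet_Ioi fun s hs => ?_
  simp only [nu2_integral, hG s hs]

lemma br_eta (M : ℝ) : ∃ N : ℕ, ∀ s ζ, br M (eta (s, ζ)) ≤ (1 + s^2)^N * (1 + ‖ζ‖^2)^N := by
  obtain ⟨N, hN⟩ := exists_nat_ge M
  refine ⟨N, fun s ζ => ?_⟩
  have h1 : br M (eta (s, ζ)) ≤ br (2 * N) (eta (s, ζ)) := by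
    apply br_mono
    have : (0:ℝ) ≤ N := by positivity
    linarith
  refine h1.trans ?_
  have : br (2 * N) (eta (s, ζ)) = (1 + s^2 * ‖ζ‖^2)^N := by
    rw [br, eta, norm_smul, mul_pow, ← Real.rpow_natCast]
    simp
  rw [this, ← mul_pow (1 + s^2)]
  exact pow_le_pow_left₀ (by positivity) (by nlinarith [sq_nonneg s, sq_nonneg ‖ζ‖]) N

/-- gamma integral -/
lemma gint {a y : ℝ} (ha : -1 < a) (hy : 0 < y) :
    ∫ s in Set.Ioi (0:ℝ), s^a * Real.exp (-π * s^2 * y)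
      = y ^ (-(a+1)/2) * (π ^ (-(a+1)/2) * (1/2) * Real.Gamma ((a+1)/2)) := by
  have h := integral_rpow_mul_exp_neg_mul_rpow (p := 2) (q := a) (b := π * y) (by norm_num) ha (by positivity)
  rw [Real.mul_rpow Real.pi_pos.le hy.le] at h
  rw [show y ^ (-(a+1)/2) * (π ^ (-(a+1)/2) * (1/2) * Real.Gamma ((a+1)/2))
    = π ^ (-(a+1)/2) * y ^ (-(a+1)/2) * (1/2) * Real.Gamma ((a+1)/2) by ring, ← h]
  refine setIntegral_congr_fun measurableSet_Ioi fun s hs => ?_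
  simp only [Real.rpow_two]
  congr 2; ring

lemma gint_int {a y : ℝ} (ha : -1 < a) (hy : 0 < y) :
    IntegrableOn (fun s : ℝ => s^a * Real.exp (-π * s^2 * y)) (Set.Ioi 0) := by
  have := integrableOn_rpow_mul_exp_neg_mul_sq (b := π * y) (by positivity) ha
  refine this.congr_fun (fun s hs => ?_) measurableSet_Ioi
  simp only
  congr 2; ring

lemma gam_smul (s : ℝ) (v : V) : Real.exp (-π * s^2) * gam (s • v) = Real.exp (-π * s^2 * br 2 v) := by
  rw [gam, ← Real.exp_add, norm_smul, mul_pow, br_two]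
  congr 1; simp; ring

lemma inner_eta (v : V) (s : ℝ) (ζ : V) : inner ℝ v (eta (s, ζ)) = inner ℝ (s • v) ζ := by
  simp [eta, inner_smul_left, inner_smul_right]

lemma cos_eta (v : V) (s : ℝ) : ∫ ζ, gam ζ * Real.cos (2 * π * inner ℝ v (eta (s, ζ))) = gam (s • v) := by
  simp only [inner_eta, mul_comm (gam _)]
  exact gam_cos _

lemma sin_eta (v : V) (s : ℝ) (j : Fin 3) :
    ∫ ζ, gam ζ * (ζ j * Real.sin (2 * π * inner ℝ v (eta (s, ζ)))) = s * v j * gam (s • v) := by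
  simp only [inner_eta, mul_comm (gam _)]
  rw [gam_sin]; simp

lemma cproj (j : Fin 3) : Measurable fun ζ : V => ζ j :=
  (EuclideanSpace.proj j : V →L[ℝ] ℝ).continuous.measurable

lemma abs_coord_le (ζ : V) (j : Fin 3) : |ζ j| ≤ ‖ζ‖ := by simpa using PiLp.norm_apply_le ζ j

/-- multiplication by `⟨v⟩^{-2}` is bounded on Sobolev spaces -/
lemma nice1 (s : ℝ) : ∃ C, 0 ≤ C ∧ ∀ f : 𝓢(V, ℂ), hn s (Mu (brc (-2)) f) ≤ C * hn s f := by
  have em := eta_meas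
  refine nice_abs (nu 1) eta eta_meas (fun _ => 2 * π) measurable_const (fun M => ?_)
    (fun x v => Real.cos (2 * π * inner ℝ v (eta x))) ?_ (fun x v => Real.abs_cos_le_one _)
    (1/2) (1/2) (by norm_num) (by norm_num) (fun g x ξ => fourier_cos g (eta x) ξ) _ (brc_htg _) (fun v => ?_) s
  · obtain ⟨N, hN⟩ := br_eta M
    refine nu_integrable (a := 0) (N := N) (by norm_num) (2 * π) _ ?_ fun s ζ => ?_
    · exact measurable_const.mul ((br_continuous M).measurable.comp eta_meas)
    · rw [abs_mul, abs_abs, abs_of_pos Real.two_pi_pos, abs_of_pos (br_pos _ _)]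
      calc _ ≤ 2 * π * ((1 + s^2)^N * (1 + ‖ζ‖^2)^N) := by gcongr; exact hN s ζ
        _ = _ := by ring
  · simp only [Function.uncurry_def]; fun_prop
  · rw [integral_complex_ofReal, brc]
    congr 1
    rw [nu_integral (q := 1) (fun x => 2 * π * Real.cos (2 * π * inner ℝ v (eta x))) ?_
      (fun s => 2 * π * gam (s • v)) ?_]
    · have h := gint (a := 1) (y := br 2 v) (by norm_num) (br_pos _ _)
      have e : ∀ s : ℝ, s^(1:ℝ) * Real.exp (-π * s^2) * (2 * π * gam (s • v))
          = 2 * π * (s^(1:ℝ) * Real.exp (-π * s^2 * br 2 v)) := by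
        intro s; rw [← gam_smul]; ring
      simp only [e]
      rw [integral_const_mul, h]
      have : br 2 v ^ (-(1+1)/2 : ℝ) = br (-2) v := by
        rw [br_two, br]; norm_num
      rw [this]
      have : π ^ (-(1+1)/2 : ℝ) = π⁻¹ := by
        rw [← Real.rpow_neg_one]; norm_num
      rw [this]
      norm_num
      field_simp
    · refine nu_integrable (a := 0) (N := 0) (by norm_num) (2 * π) _ (by fun_prop) fun s ζ => ?_
      rw [abs_mul, abs_of_pos Real.two_pi_pos]
      simpa using mul_le_mul_of_nonneg_left (Real.abs_cos_le_one (2 * π * inner ℝ v (eta (s, ζ)))) Real.two_pi_pos.le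
    · intro s hs
      rw [← cos_eta, ← integral_const_mul]
      congr 1; ext ζ; ring

/-- multiplication by `v_j ⟨v⟩^{-2}` is bounded on Sobolev spaces -/
lemma nice2 (j : Fin 3) (s : ℝ) : ∃ C, 0 ≤ C ∧ ∀ f : 𝓢(V, ℂ),
    hn s (Mu (fun v => ((v j : ℝ) : ℂ) * brc (-2) v) f) ≤ C * hn s f := by
  have em := eta_meas
  have cp := cproj j
  have hI : ‖Complex.I / 2‖ ≤ 1 := by simp; norm_num
  have htg : (fun v : V => ((v j : ℝ) : ℂ) * brc (-2) v).HasTemperateGrowth := by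
    have := coord_htg j
    have := brc_htg (-2)
    fun_prop
  refine nice_abs (nu 0) eta eta_meas (fun x => 2 * π * x.2 j) (by fun_prop) (fun M => ?_)
    (fun x v => Real.sin (2 * π * inner ℝ v (eta x))) ?_ (fun x v => Real.abs_sin_le_one _)
    (-(Complex.I/2)) (Complex.I/2) (by rwa [norm_neg]) hI (fun g x ξ => fourier_sin g (eta x) ξ) _ htg (fun v => ?_) s
  · obtain ⟨N, hN⟩ := br_eta M
    refine nu_integrable (a := 0) (N := N + 1) (by norm_num) (2 * π) _ ?_ fun s ζ => ?_
    · exact (Measurable.abs (by fun_prop)).mul ((br_continuous M).measurable.comp eta_meas)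
    · rw [abs_mul, abs_abs, abs_mul, abs_of_pos Real.two_pi_pos, abs_of_pos (br_pos _ _)]
      have h1 : |ζ j| ≤ 1 + ‖ζ‖^2 := (abs_coord_le ζ j).trans (by nlinarith [sq_nonneg (‖ζ‖ - 1)])
      have h2 : 1 ≤ 1 + s^2 := by nlinarith [sq_nonneg s]
      have h3 := br_pos M (eta (s, ζ))
      calc _ ≤ 2 * π * (1 + ‖ζ‖^2) * ((1 + s^2)^N * (1 + ‖ζ‖^2)^N) := by gcongr; exact hN s ζ
        _ = 2 * π * (1 * (1 + s^2)^N) * (1 + ‖ζ‖^2)^(N+1) := by ring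
        _ ≤ 2 * π * ((1 + s^2) * (1 + s^2)^N) * (1 + ‖ζ‖^2)^(N+1) := by gcongr
        _ = _ := by ring
  · simp only [Function.uncurry_def]; fun_prop
  · rw [integral_complex_ofReal, brc, ← Complex.ofReal_mul]
    congr 1
    rw [nu_integral (q := 0) (fun x => 2 * π * x.2 j * Real.sin (2 * π * inner ℝ v (eta x))) ?_
      (fun s => 2 * π * (s * v j * gam (s • v))) ?_]
    · have h := gint (a := 1) (y := br 2 v) (by norm_num) (br_pos _ _)
      have e : ∀ s : ℝ, s^(0:ℝ) * Real.exp (-π * s^2) * (2 * π * (s * v j * gam (s • v)))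
          = 2 * π * v j * (s^(1:ℝ) * Real.exp (-π * s^2 * br 2 v)) := by
        intro s; rw [← gam_smul, Real.rpow_zero, Real.rpow_one]; ring
      simp only [e]
      rw [integral_const_mul, h]
      have : br 2 v ^ (-(1+1)/2 : ℝ) = br (-2) v := by
        rw [br_two, br]; norm_num
      rw [this]
      have : π ^ (-(1+1)/2 : ℝ) = π⁻¹ := by
        rw [← Real.rpow_neg_one]; norm_num
      rw [this]
      norm_num
      field_simp
    · refine nu_integrable (a := 0) (N := 1) (by norm_num) (2 * π) _ (by fun_prop) fun s ζ => ?_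
      rw [abs_mul, abs_mul, abs_of_pos Real.two_pi_pos]
      have h1 : |ζ j| ≤ 1 + ‖ζ‖^2 := (abs_coord_le ζ j).trans (by nlinarith [sq_nonneg (‖ζ‖ - 1)])
      have h2 : 1 ≤ 1 + s^2 := by nlinarith [sq_nonneg s]
      calc _ ≤ 2 * π * (1 + ‖ζ‖^2) * 1 := by gcongr; exact Real.abs_sin_le_one _
        _ ≤ 2 * π * (1 + ‖ζ‖^2) * (1 + s^2) := by gcongr
        _ = _ := by ring
    · intro s hs
      rw [← sin_eta, ← integral_const_mul]
      congr 1; ext ζ; ring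

lemma exp_diff_bound {y : ℝ} (hy : 1 ≤ y) (s : ℝ) :
    0 ≤ Real.exp (-π * s^2) - Real.exp (-π * s^2 * y) ∧
    Real.exp (-π * s^2) - Real.exp (-π * s^2 * y) ≤ π * y * s^2 * Real.exp (-π * s^2) := by
  have h0 : 0 ≤ π * s^2 := by positivity
  have e : Real.exp (-π * s^2 * y) = Real.exp (-π * s^2) * Real.exp (-(π * s^2 * (y - 1))) := by
    rw [← Real.exp_add]; congr 1; ring
  have h1 : 1 - π * s^2 * (y - 1) ≤ Real.exp (-(π * s^2 * (y - 1))) := by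
    have := Real.add_one_le_exp (-(π * s^2 * (y - 1))); linarith
  have h2 : Real.exp (-(π * s^2 * (y - 1))) ≤ 1 := Real.exp_le_one_iff.2 (by nlinarith)
  have h3 := Real.exp_pos (-π * s^2)
  rw [e]
  constructor <;> nlinarith

/-- gamma constant -/
def gc (b : ℝ) : ℝ := π ^ (-(1-b+1)/2) * (1/2) * Real.Gamma ((1-b+1)/2)

lemma gc_pos {b : ℝ} (hb : b < 2) : 0 < gc b := by
  have := Real.Gamma_pos_of_pos (s := (1-b+1)/2) (by linarith)
  unfold gc; positivity

lemma ibp {b y : ℝ} (hb0 : 0 < b) (hb : b < 2) (hy : 1 ≤ y) :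
    ∫ s in Set.Ioi (0:ℝ), s^(-b-1) * (Real.exp (-π * s^2) - Real.exp (-π * s^2 * y))
      = 2 * π * gc b / b * (y^(b/2) - 1) := by
  have hy0 : 0 < y := by linarith
  set D : ℝ → ℝ := fun s => Real.exp (-π * s^2) - Real.exp (-π * s^2 * y) with hD
  have hDd : ∀ s, HasDerivAt D (2 * π * s * (y * Real.exp (-π * s^2 * y) - Real.exp (-π * s^2))) s := by
    intro s
    have h1 : HasDerivAt (fun s : ℝ => -π * s^2) (-π * (2 * s)) s := by
      simpa using (hasDerivAt_pow 2 s).const_mul (-π)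
    exact (h1.exp.sub (h1.mul_const y).exp).congr_deriv (by ring)
  set f : ℝ → ℝ := fun s => -(1/b) * (s^(-b) * D s) with hf
  have i1 : IntegrableOn (fun s : ℝ => s^(-b-1) * D s) (Set.Ioi 0) := by
    have hg := (gint_int (a := 1 - b) (y := 1) (by linarith) one_pos).const_mul (π * y)
    refine Integrable.mono' hg ?_ ((ae_restrict_iff' measurableSet_Ioi).2 (Filter.Eventually.of_forall fun s hs => ?_))
    · exact Measurable.aestronglyMeasurable (by simp only [hD]; fun_prop)
    · have hs0 : (0:ℝ) < s := hs
      obtain ⟨d0, d1⟩ := exp_diff_bound hy s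
      rw [norm_mul, Real.norm_of_nonneg (by positivity), Real.norm_of_nonneg d0, mul_one]
      have : s^(1-b) = s^(-b-1) * s^2 := by
        rw [← Real.rpow_two, ← Real.rpow_add hs0]; congr 1; ring
      rw [this]
      calc _ ≤ s^(-b-1) * (π * y * s^2 * Real.exp (-π * s^2)) := by gcongr
        _ = _ := by ring
  have i2 : IntegrableOn (fun s : ℝ => 2 * π / b * (y * (s^(1-b) * Real.exp (-π * s^2 * y)) - s^(1-b) * Real.exp (-π * s^2 * 1))) (Set.Ioi 0) :=
    (((gint_int (a := 1 - b) (by linarith) hy0).const_mul y).sub (gint_int (a := 1 - b) (y := 1) (by linarith) one_pos)).const_mul _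
  have hder : ∀ s ∈ Set.Ioi (0:ℝ), HasDerivAt f (s^(-b-1) * D s
      - 2 * π / b * (y * (s^(1-b) * Real.exp (-π * s^2 * y)) - s^(1-b) * Real.exp (-π * s^2 * 1))) s := by
    intro s hs
    have hs0 : (0:ℝ) < s := hs
    have h1 := Real.hasDerivAt_rpow_const (x := s) (p := -b) (Or.inl hs0.ne')
    refine ((h1.mul (hDd s)).const_mul (-(1/b))).congr_deriv ?_
    have : s^(1-b) = s^(-b) * s := by
      nth_rewrite 3 [← Real.rpow_one s]
      rw [← Real.rpow_add hs0]; congr 1; ring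
    rw [this, mul_one]
    field_simp
    ring
  have hf0 : f 0 = 0 := by simp [hf, hD]
  have hfb : ∀ s, 0 ≤ s → |f s| ≤ 1/b * (π * y) * s^(2-b) := by
    intro s hs
    rcases hs.eq_or_lt with rfl | hs0
    · rw [hf0]; simp; positivity
    obtain ⟨d0, d1⟩ := exp_diff_bound hy s
    have : s^(2-b) = s^(-b) * s^2 := by
      rw [← Real.rpow_two, ← Real.rpow_add hs0]; congr 1; ring
    simp only [hf]
    rw [abs_mul, abs_mul, abs_neg, abs_of_pos (by positivity : 0 < 1/b), abs_of_pos (by positivity : 0 < s^(-b)), abs_of_nonneg d0, this]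
    have : Real.exp (-π * s^2) ≤ 1 := Real.exp_le_one_iff.2 (by have := Real.pi_pos; nlinarith [sq_nonneg s])
    calc _ ≤ 1/b * (s^(-b) * (π * y * s^2 * 1)) := by
          gcongr
          exact d1.trans (by gcongr)
      _ = _ := by ring
  have hcont : ContinuousWithinAt f (Set.Ici 0) 0 := by
    rw [ContinuousWithinAt, hf0]
    refine squeeze_zero_norm' (a := fun s => 1/b * (π * y) * s^(2-b)) ?_ ?_
    · filter_upwards [self_mem_nhdsWithin] with s hs using hfb s hs
    · have : ContinuousAt (fun s : ℝ => 1/b * (π * y) * s^(2-b)) 0 :=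
        (Real.continuousAt_rpow_const 0 (2-b) (Or.inr (by linarith))).const_mul _
      have h2 := this.tendsto
      rw [Real.zero_rpow (by linarith), mul_zero] at h2
      exact h2.mono_left nhdsWithin_le_nhds
  have hlim : Filter.Tendsto f Filter.atTop (nhds 0) := by
    have h1 : Filter.Tendsto (fun s : ℝ => 1/b * s^(-b)) Filter.atTop (nhds 0) := by
      simpa using (tendsto_rpow_neg_atTop hb0).const_mul (1/b)
    refine squeeze_zero_norm' ?_ h1
    filter_upwards [Filter.eventually_gt_atTop 0] with s hs0
    obtain ⟨d0, d1⟩ := exp_diff_bound hy s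
    simp only [hf]
    rw [norm_mul, norm_mul, norm_neg, Real.norm_of_nonneg (by positivity : 0 ≤ 1/b),
      Real.norm_of_nonneg (by positivity : 0 ≤ s^(-b)), Real.norm_of_nonneg d0]
    have : Real.exp (-π * s^2) ≤ 1 := Real.exp_le_one_iff.2 (by have := Real.pi_pos; nlinarith [sq_nonneg s])
    have h3 : D s ≤ 1 := by
      have := Real.exp_pos (-π * s^2 * y)
      simp only [hD]; linarith
    calc _ ≤ 1/b * (s^(-b) * 1) := by gcongr
      _ = _ := by ring
  have main := integral_Ioi_of_hasDerivAt_of_tendsto hcont hder (i1.sub i2) hlim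
  rw [hf0, integral_sub i1 i2, integral_const_mul, integral_sub, integral_const_mul,
    gint (by linarith) hy0, gint (by linarith) one_pos, Real.one_rpow] at main
  · have e : y * y^(-(1-b+1)/2) = y^(b/2) := by
      nth_rewrite 1 [← Real.rpow_one y]
      rw [← Real.rpow_add hy0]; congr 1; ring
    rw [show 2 * π * gc b / b * (y^(b/2) - 1) = 2 * π / b * (y * (y^(-(1-b+1)/2) * gc b) - 1 * gc b) by
      rw [← e]; ring]
    unfold gc
    linarith
  · exact ((gint_int (a := 1 - b) (by linarith) hy0).const_mul y)
  · exact (gint_int (a := 1 - b) (y := 1) (by linarith) one_pos)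

lemma mom_base {b : ℝ} (hb : b < 2) (M : ℝ) : Integrable (fun x => ‖eta x‖^2 * br M (eta x)) (nu (-b-1)) := by
  obtain ⟨N, hN⟩ := br_eta M
  refine nu_integrable (a := 2) (N := N + 1) (by push_cast; linarith) 1 _ ?_ fun s ζ => ?_
  · have := eta_meas
    exact (by fun_prop : Measurable fun x => ‖eta x‖^2).mul ((br_continuous M).measurable.comp eta_meas)
  · have h3 := br_pos M (eta (s, ζ))
    rw [abs_of_nonneg (by positivity)]
    have h2 : 1 ≤ 1 + s^2 := by nlinarith [sq_nonneg s]
    have h4 : ‖eta (s, ζ)‖^2 ≤ s^2 * (1 + ‖ζ‖^2) := by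
      rw [eta, norm_smul, mul_pow]; simp; nlinarith [sq_nonneg s]
    calc _ ≤ s^2 * (1 + ‖ζ‖^2) * ((1 + s^2)^N * (1 + ‖ζ‖^2)^N) := by gcongr; exact hN s ζ
      _ = s^2 * (1 * (1 + s^2)^N) * (1 + ‖ζ‖^2)^(N+1) := by ring
      _ ≤ s^2 * ((1 + s^2) * (1 + s^2)^N) * (1 + ‖ζ‖^2)^(N+1) := by gcongr
      _ = _ := by ring

lemma int_base {b : ℝ} (hb : b < 2) (v : V) (F : ℝ × V → ℝ) (hF : Measurable F)
    (h : ∀ x, |F x| ≤ (4 * π^2 * ‖eta x‖^2) * br 2 v) : Integrable F (nu (-b-1)) := by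
  have h0 := ((mom_base hb 0).const_mul (4 * π^2)).mul_const (br 2 v)
  refine h0.mono' hF.aestronglyMeasurable (Filter.Eventually.of_forall fun x => ?_)
  refine (h x).trans (le_of_eq ?_)
  rw [br_zero]; ring

lemma rep_cos {b : ℝ} (hb0 : 0 < b) (hb : b < 2) (v : V) :
    2 * π * gc b / b * (br b v - 1) = ∫ x, (1 - Real.cos (2 * π * inner ℝ v (eta x))) ∂(nu (-b-1)) := by
  have em := eta_meas
  rw [nu_integral (q := -b-1) _ (int_base hb v _ (by fun_prop) fun x => cos_bound v (eta x)) (fun s => 1 - gam (s • v))]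
  · have h := ibp hb0 hb (y := br 2 v) (br_ge_one (by norm_num) v)
    have e : br 2 v ^ (b/2) = br b v := by rw [br_two, br]
    rw [e] at h
    rw [← h]
    congr 1; ext s
    rw [← gam_smul]; ring
  · intro s hs
    have hi : Integrable fun ζ => gam ζ * Real.cos (2 * π * inner ℝ v (eta (s, ζ))) := by
      refine gam_int.mul_bdd (c := 1) (Measurable.aestronglyMeasurable (by fun_prop)) (Filter.Eventually.of_forall fun v => ?_)
      exact Real.abs_cos_le_one _
    simp only [mul_sub, mul_one]
    rw [integral_sub gam_int hi, cos_eta]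
    have := gam_cos 0
    simp [gam] at this ⊢
    exact this

lemma rep_sin {b : ℝ} (hb : b < 2) (v : V) (j : Fin 3) :
    2 * π * gc b * (v j * br (b-2) v)
      = ∫ x, 2 * π * eta x j * Real.sin (2 * π * inner ℝ v (eta x)) ∂(nu (-b-1)) := by
  have em := eta_meas
  have cp := cproj j
  rw [nu_integral (q := -b-1) _ (int_base hb v _ ?_ fun x => sin_bound v (eta x) j)
    (fun s => 2 * π * s * (s * v j * gam (s • v)))]
  · have h := gint (a := 1 - b) (y := br 2 v) (by linarith) (br_pos _ _)
    have e : br 2 v ^ (-(1-b+1)/2) = br (b-2) v := by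
      rw [br_two, br]; congr 1; ring
    rw [e] at h
    have e2 : ∀ s ∈ Set.Ioi (0:ℝ), s^(-b-1) * Real.exp (-π * s^2) * (2 * π * s * (s * v j * gam (s • v)))
        = 2 * π * v j * (s^(1-b) * Real.exp (-π * s^2 * br 2 v)) := by
      intro s hs
      have hs0 : (0:ℝ) < s := hs
      have : s^(1-b) = s^(-b-1) * s^2 := by
        rw [← Real.rpow_two, ← Real.rpow_add hs0]; congr 1; ring
      rw [← gam_smul, this]; ring
    rw [setIntegral_congr_fun measurableSet_Ioi e2, integral_const_mul, h, gc]
    ring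
  · intro s hs
    rw [← sin_eta, ← integral_const_mul]
    congr 1; ext ζ
    simp only [eta, PiLp.smul_apply, smul_eq_mul]; ring
  · have : Measurable fun x => eta x j := cp.comp em
    fun_prop

/-- coordinate function -/
def co (j : Fin 3) (v : V) : ℂ := ((v j : ℝ) : ℂ)
lemma co_htg (j : Fin 3) : (co j).HasTemperateGrowth := coord_htg j

lemma fourier_co (j : Fin 3) (f : 𝓢(V, ℂ)) (ξ : V) :
    𝓕 (Mu (co j) f) ξ = -kap * fderiv ℝ (𝓕 f : 𝓢(V, ℂ)) ξ (EuclideanSpace.single j 1) := by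
  have h := SchwartzMap.lineDerivOp_fourier_eq f (EuclideanSpace.single j (1:ℝ))
  have e : smulLeftCLM ℂ (fun v : V => inner ℝ v (EuclideanSpace.single j (1:ℝ))) f = Mu (co j) f := by
    ext v
    rw [Mu_apply (co_htg j), smulLeftCLM_apply_apply (by fun_prop)]
    simp [co, EuclideanSpace.inner_single_right]
  have h2 := congrArg (fun g : 𝓢(V, ℂ) => g ξ) h
  rw [e] at h2
  beta_reduce at h2
  rw [SchwartzMap.lineDerivOp_apply_eq_fderiv] at h2
  have h3 : 𝓕 (-(2 * π * Complex.I) • Mu (co j) f) = -(2 * π * Complex.I) • 𝓕 (Mu (co j) f) :=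
    map_smul (FourierTransform.fourierCLM ℂ 𝓢(V, ℂ)) _ _
  rw [h3] at h2
  rw [h2]
  have : (π : ℂ) ≠ 0 := by exact_mod_cast Real.pi_ne_zero
  simp [kap]
  field_simp
  rw [Complex.I_sq]; ring

lemma comm_co {r : ℝ} {p : V → ℂ} (hp : Sym r p) (q : Fin 3 → V → ℂ)
    (hq : ∀ j, Sym (r - 1) (q j)) (hd : ∀ ξ, HasFDerivAt p (dL q ξ) ξ) (j : Fin 3) (f : 𝓢(V, ℂ)) :
    Op p (Mu (co j) f) = Mu (co j) (Op p f) + Op (fun ξ => kap * q j ξ) f := by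
  apply (FourierTransform.fourierCLE ℂ 𝓢(V, ℂ)).injective
  simp only [FourierTransform.fourierCLE_apply]
  have ha : ∀ a b : 𝓢(V, ℂ), 𝓕 (a + b) = 𝓕 a + 𝓕 b := fun a b => map_add (FourierTransform.fourierCLM ℂ 𝓢(V, ℂ)) a b
  ext ξ
  rw [ha, add_apply, fourier_Op_apply hp.htg, fourier_co, fourier_co,
    fourier_Op_apply (hq j).coordDeriv_htg]
  have h1 : HasFDerivAt (𝓕 (Op p f) : 𝓢(V, ℂ)) (p ξ • fderiv ℝ (𝓕 f : 𝓢(V, ℂ)) ξ + (𝓕 f ξ) • dL q ξ) ξ := by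
    have e : ⇑(𝓕 (Op p f) : 𝓢(V, ℂ)) = fun ξ => p ξ * 𝓕 f ξ := by
      ext ξ; exact fourier_Op_apply hp.htg f ξ
    rw [e]
    exact (hd ξ).mul (𝓕 f : 𝓢(V, ℂ)).differentiableAt.hasFDerivAt
  rw [h1.fderiv]
  have h2 : dL q ξ (EuclideanSpace.single j 1) = q j ξ := by
    rw [dL_apply, Finset.sum_eq_single j]
    · simp
    · intro i _ hij; simp [hij]
    · simp
  simp [h2]
  ring

lemma comm_data {r : ℝ} {p : V → ℂ} (hp : Sym r p) : ∃ a c : Fin 3 → V → ℂ,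
    (∀ j, Sym (r - 1) (a j)) ∧ (∀ j, Sym (r - 1 - 1) (c j)) ∧
    (∀ j f, Op p (Mu (co j) f) = Mu (co j) (Op p f) + Op (a j) f) ∧
    (∀ j f, Op (a j) (Mu (co j) f) = Mu (co j) (Op (a j) f) + Op (c j) f) := by
  obtain ⟨q, hq, hd⟩ := hp.deriv
  have ha : ∀ j, Sym (r - 1) (fun ξ => kap * q j ξ) := fun j => Sym.smul _ kap _ (hq j)
  choose q' hq' hd' using fun j => (ha j).deriv
  exact ⟨fun j ξ => kap * q j ξ, fun j ξ => kap * q' j j ξ, ha, fun j => Sym.smul _ kap _ (hq' j j),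
    fun j f => comm_co hp q hq hd j f, fun j f => comm_co (ha j) (q' j) (hq' j) (hd' j) j f⟩

lemma norm_brc (m : ℝ) (v : V) : ‖brc m v‖ = br m v := by
  rw [brc, Complex.norm_real, Real.norm_of_nonneg (br_pos _ _).le]

lemma brc_add (s t : ℝ) (v : V) : brc (s + t) v = brc s v * brc t v := by
  simp [brc, br_add]

lemma Mu_brc_add (s t u : ℝ) (h : u = s + t) (f : 𝓢(V, ℂ)) : Mu (brc u) f = Mu (brc s) (Mu (brc t) f) := by
  subst h
  rw [Mu_Mu (brc_htg _) (brc_htg _)]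
  congr 1
  ext v
  rw [Mu_apply (brc_htg _), Mu_apply (by have := brc_htg s; have := brc_htg t; fun_prop), brc_add]

lemma Mu_brc_zero (f : 𝓢(V, ℂ)) : Mu (brc 0) f = f := by
  ext v; rw [Mu_apply (brc_htg _)]; simp [brc, br_zero]

lemma Mu_brc_two (f : 𝓢(V, ℂ)) : Mu (brc 2) f = f + ∑ j, Mu (co j) (Mu (co j) f) := by
  ext v
  rw [Mu_apply (brc_htg _), add_apply, sum_apply]
  simp only [Mu_apply (co_htg _), brc, br_two, co, EuclideanSpace.norm_sq_eq]
  simp [Fin.sum_univ_three]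
  ring

lemma Mu_comm {p q : V → ℂ} (hp : p.HasTemperateGrowth) (hq : q.HasTemperateGrowth) (f : 𝓢(V, ℂ)) :
    Mu p (Mu q f) = Mu q (Mu p f) := by
  ext v; simp only [Mu_apply hp, Mu_apply hq]; ring

/-- the conjugated commutator statement -/
def S (m : ℝ) : Prop := ∀ r p, Sym r p → ∃ C, 0 ≤ C ∧ ∀ f : 𝓢(V, ℂ),
  n2 (Op p f - Mu (brc m) (Op p (Mu (brc (-m)) f))) ≤ C * hn (r - 1) f

lemma S_zero : S 0 := fun r p hp => ⟨0, le_rfl, fun f => by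
  rw [neg_zero, Mu_brc_zero, Mu_brc_zero, sub_self, zero_mul]
  have := n2_smul 0 (0 : 𝓢(V, ℂ))
  simp at this
  exact this.le⟩

lemma S_conj {m : ℝ} (h : S m) {s t : ℝ} (hst : s ≤ t) {p : V → ℂ} (hp : Sym s p) : ∃ C, 0 ≤ C ∧ ∀ f : 𝓢(V, ℂ),
    n2 (Mu (brc m) (Op p (Mu (brc (-m)) f))) ≤ C * hn t f := by
  obtain ⟨C, hC, hb⟩ := h s p hp
  obtain ⟨D, hD, hb'⟩ := hn_Op hp
  refine ⟨D + C, by positivity, fun f => ?_⟩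
  have e : Mu (brc m) (Op p (Mu (brc (-m)) f)) = Op p f - (Op p f - Mu (brc m) (Op p (Mu (brc (-m)) f))) := by
    abel
  rw [e]
  refine (n2_sub _ _).trans ?_
  have h1 : C * hn (s - 1) f ≤ C * hn t f := mul_le_mul_of_nonneg_left (hn_mono (by linarith) f) hC
  have h2 : D * hn s f ≤ D * hn t f := mul_le_mul_of_nonneg_left (hn_mono hst f) hD
  linarith [hb f, hb' f]

lemma wcoord_le (v : V) (j : Fin 3) : ‖co j v * brc (-2) v‖ ≤ 1 := by
  rw [norm_mul, norm_brc, co, Complex.norm_real, Real.norm_eq_abs]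
  calc _ ≤ br 1 v * br (-2) v := mul_le_mul_of_nonneg_right (coord_le_br v j) (br_pos _ _).le
    _ = br (-1) v := by rw [← br_add]; norm_num
    _ ≤ 1 := br_le_one (by norm_num) v

lemma cw_htg (j : Fin 3) : (fun v => co j v * brc (-2) v).HasTemperateGrowth := by
  have := co_htg j
  have := brc_htg (-2)
  fun_prop

lemma S_down {m : ℝ} (h : S m) : S (m - 2) := by
  intro r p hp
  obtain ⟨a, c, ha, hc, h1, h2⟩ := comm_data hp
  obtain ⟨C, hC, hb⟩ := h r p hp
  choose Da hDa hba using fun j => S_conj h (le_refl (r-1)) (ha j)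
  choose Dc hDc hbc using fun j => S_conj h (by linarith : r - 1 - 1 ≤ r - 1) (hc j)
  refine ⟨C + ∑ j, (2 * Da j + Dc j), by
    have : 0 ≤ ∑ j, (2 * Da j + Dc j) := Finset.sum_nonneg fun j _ => by have := hDa j; have := hDc j; positivity
    positivity, fun f => ?_⟩
  have key : Op p f - Mu (brc (m-2)) (Op p (Mu (brc (-(m-2))) f))
      = (Op p f - Mu (brc m) (Op p (Mu (brc (-m)) f)))
        - ∑ j, ((2:ℂ) • Mu (fun v => co j v * brc (-2) v) (Mu (brc m) (Op (a j) (Mu (brc (-m)) f)))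
            + Mu (brc (-2)) (Mu (brc m) (Op (c j) (Mu (brc (-m)) f)))) := by
    rw [Mu_brc_add 2 (-m) (-(m-2)) (by ring)]
    generalize Mu (brc (-m)) f = g
    rw [Mu_brc_two, map_add, map_sum]
    simp only [h1, h2]
    rw [Mu_brc_add (-2) m (m-2) (by ring)]
    have e0 : Op p g + ∑ x, (Mu (co x) (Mu (co x) (Op p g) + Op (a x) g) + (Mu (co x) (Op (a x) g) + Op (c x) g))
        = Mu (brc 2) (Op p g) + ∑ x, ((2:ℂ) • Mu (co x) (Op (a x) g) + Op (c x) g) := by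
      rw [Mu_brc_two, add_assoc, ← Finset.sum_add_distrib]
      congr 2; ext1 x
      rw [map_add, two_smul]; abel
    rw [e0, map_add, map_add, map_sum, map_sum, Mu_comm (brc_htg m) (brc_htg 2),
      ← Mu_brc_add (-2) 2 0 (by ring), Mu_brc_zero, ← sub_sub]
    congr 1
    refine Finset.sum_congr rfl fun j _ => ?_
    rw [map_add, map_add, map_smul, map_smul, Mu_comm (brc_htg m) (co_htg j), Mu_comm (brc_htg (-2)) (co_htg j), Mu_Mu (co_htg j) (brc_htg _)]
  rw [key, add_mul, Finset.sum_mul]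
  refine (n2_sub _ _).trans (add_le_add (hb f) ((n2_sum _ _).trans (Finset.sum_le_sum fun j _ => ?_)))
  refine (n2_add _ _).trans ?_
  rw [n2_smul]
  have b1 := n2_Mu_le (cw_htg j) (fun v => wcoord_le v j) (Mu (brc m) (Op (a j) (Mu (brc (-m)) f)))
  have b2 := n2_Mu_le (brc_htg (-2)) (C := 1) (fun v => by rw [norm_brc]; exact br_le_one (by norm_num) v)
    (Mu (brc m) (Op (c j) (Mu (brc (-m)) f)))
  have := hba j f
  have := hbc j f
  have hh : ‖(2:ℂ)‖ = 2 := by norm_num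
  rw [hh, add_mul]
  linarith

lemma S_up {m : ℝ} (h : S m) : S (m + 2) := by
  intro r p hp
  obtain ⟨a, c, ha, hc, h1, h2⟩ := comm_data hp
  obtain ⟨C, hC, hb⟩ := h r p hp
  choose Da hDa hba using fun j => S_conj h (le_refl (r-1)) (ha j)
  choose Dc hDc hbc using fun j => S_conj h (by linarith : r - 1 - 1 ≤ r - 1) (hc j)
  obtain ⟨E, hE, hbE⟩ := nice1 (r - 1)
  choose E2 hE2 hbE2 using fun j => nice2 j (r-1)
  refine ⟨C + ∑ j, (2 * (Da j * E2 j) + Dc j * E), by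
    have : 0 ≤ ∑ j, (2 * (Da j * E2 j) + Dc j * E) := Finset.sum_nonneg fun j _ => by
      have := hDa j; have := hDc j; have := hE2 j; positivity
    positivity, fun f => ?_⟩
  have key : Op p f - Mu (brc (m+2)) (Op p (Mu (brc (-(m+2))) f))
      = (Op p f - Mu (brc m) (Op p (Mu (brc (-m)) f)))
        + ∑ j, ((2:ℂ) • Mu (brc m) (Op (a j) (Mu (brc (-m)) (Mu (fun v => co j v * brc (-2) v) f)))
            - Mu (brc m) (Op (c j) (Mu (brc (-m)) (Mu (brc (-2)) f)))) := by
    have e1 : ∀ j, Mu (brc (-m)) (Mu (fun v => co j v * brc (-2) v) f) = Mu (co j) (Mu (brc (-(m+2))) f) := by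
      intro j
      rw [Mu_brc_add (-m) (-2) (-(m+2)) (by ring), ← Mu_Mu (co_htg j) (brc_htg _), Mu_comm (co_htg j) (brc_htg (-m))]
    have e2 : Mu (brc (-m)) (Mu (brc (-2)) f) = Mu (brc (-(m+2))) f :=
      (Mu_brc_add (-m) (-2) (-(m+2)) (by ring) f).symm
    have e3 : Mu (brc (-m)) f = Mu (brc 2) (Mu (brc (-(m+2))) f) := Mu_brc_add _ _ _ (by ring) f
    simp only [e1, e2, e3]
    generalize Mu (brc (-(m+2))) f = g
    rw [Mu_brc_add m 2 (m+2) (by ring)]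
    have e0 : Mu (brc 2) (Op p g) = Op p (Mu (brc 2) g) - ∑ j, ((2:ℂ) • Op (a j) (Mu (co j) g) - Op (c j) g) := by
      rw [Mu_brc_two, Mu_brc_two, map_add, map_sum, add_sub_assoc, ← Finset.sum_sub_distrib]
      congr 2; ext1 j
      simp only [h1, h2, map_add, two_smul]; abel
    rw [e0, map_sub, map_sum, sub_sub_eq_add_sub, add_sub_right_comm]
    congr 1
    refine Finset.sum_congr rfl fun j _ => ?_
    rw [map_sub, map_smul]
  rw [key, add_mul, Finset.sum_mul]
  refine (n2_add _ _).trans (add_le_add (hb f) ((n2_sum _ _).trans (Finset.sum_le_sum fun j _ => ?_)))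
  refine (n2_sub _ _).trans ?_
  rw [n2_smul]
  have b1 := hba j (Mu (fun v => co j v * brc (-2) v) f)
  have b2 := hbc j (Mu (brc (-2)) f)
  have c1 := mul_le_mul_of_nonneg_left (hbE f) (hDc j)
  have c2 : Da j * hn (r-1) (Mu (fun v => co j v * brc (-2) v) f) ≤ Da j * (E2 j * hn (r-1) f) :=
    mul_le_mul_of_nonneg_left (hbE2 j f) (hDa j)
  have hh : ‖(2:ℂ)‖ = 2 := by norm_num
  rw [hh]
  linarith

lemma S_base {b : ℝ} (hb0 : 0 < b) (hb : b < 2) : S (-b) := by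
  intro r p hp
  obtain ⟨q, hq, hd⟩ := hp.deriv
  have ha : ∀ j, Sym (r - 1) (fun ξ => kap * q j ξ) := fun j => Sym.smul _ kap _ (hq j)
  choose D hD hbD using fun j => hn_Op (ha j)
  set K : ℝ := 2 * π * gc b / b with hK
  have hKp : 0 < K := by have := gc_pos hb; positivity
  set φ : V → ℂ := fun v => ((K : ℝ) : ℂ) * (brc b v - 1) with hφ
  set φ' : Fin 3 → V → ℂ := fun j v => ((K : ℝ) : ℂ) * ((b : ℂ) * (co j v * brc (b-2) v)) with hφ'
  have wb := brc_htg b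
  have wb2 := brc_htg (b-2)
  have hφt : φ.HasTemperateGrowth := by simp only [hφ]; fun_prop
  have hφt' : ∀ j, (φ' j).HasTemperateGrowth := fun j => by
    have := co_htg j
    simp only [hφ']; fun_prop
  obtain ⟨C, hC, hbC⟩ := base_abs (nu (-b-1)) eta eta_meas (mom_base hb) φ hφt
    (fun v => by
      rw [integral_complex_ofReal, ← rep_cos hb0 hb v]
      simp [hφ, hK, brc])
    φ' hφt' (fun j v => by
      rw [integral_complex_ofReal, ← rep_sin hb v j]
      simp only [hφ', hK, brc, co]
      push_cast
      have : (b:ℂ) ≠ 0 := by exact_mod_cast hb0.ne'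
      field_simp) hp q hq hd
  refine ⟨C / K + ∑ j, b * D j, by
    have : 0 ≤ ∑ j, b * D j := Finset.sum_nonneg fun j _ => by have := hD j; positivity
    positivity, fun f => ?_⟩
  set R := Op p (Mu φ f) - Mu φ (Op p f) - ∑ j, Mu (φ' j) (Op (fun ξ => kap * q j ξ) f) with hR
  have hψt : ∀ j, (fun v => brc (-b) v * (co j v * brc (b-2) v)).HasTemperateGrowth := fun j => by
    have := co_htg j
    have := brc_htg (-b)
    fun_prop
  have key : Op p f - Mu (brc (-b)) (Op p (Mu (brc (- -b)) f))
      = -(((K⁻¹ : ℝ) : ℂ) • Mu (brc (-b)) R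
        + ∑ j, (b : ℂ) • Mu (fun v => brc (-b) v * (co j v * brc (b-2) v)) (Op (fun ξ => kap * q j ξ) f)) := by
    have e1 : Mu φ f = ((K : ℝ) : ℂ) • (Mu (brc b) f - f) := by
      ext v
      rw [Mu_apply hφt, smul_apply, sub_apply, Mu_apply wb]
      simp only [hφ, smul_eq_mul]; ring
    have hKc : ((K : ℝ) : ℂ) ≠ 0 := by exact_mod_cast hKp.ne'
    ext v
    rw [neg_neg, neg_apply, add_apply, smul_apply, sum_apply, Mu_apply (brc_htg _), hR, sub_apply, sub_apply, sub_apply, sum_apply,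
      e1, map_smul, map_sub, Mu_apply hφt, smul_apply, sub_apply, Mu_apply (brc_htg _)]
    simp only [smul_apply, Mu_apply (hφt' _), Mu_apply (hψt _)]
    have hw : brc (-b) v * brc b v = 1 := by rw [← brc_add]; simp [brc, br_zero]
    simp only [hφ, hφ', smul_eq_mul, Fin.sum_univ_three, Complex.ofReal_inv]
    field_simp
    linear_combination (- (Op p f v)) * hw
  rw [key, n2_neg, add_mul, Finset.sum_mul]
  refine (n2_add _ _).trans (add_le_add ?_ ((n2_sum _ _).trans (Finset.sum_le_sum fun j _ => ?_)))
  · rw [n2_smul, Complex.norm_real, Real.norm_of_nonneg (by positivity)]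
    have b2 := n2_Mu_le (brc_htg (-b)) (C := 1) (fun v => by rw [norm_brc]; exact br_le_one (by linarith) v) R
    have b3 := hbC f
    have b4 : C * hn (r-2) f ≤ C * hn (r-1) f := mul_le_mul_of_nonneg_left (hn_mono (by linarith) f) hC
    calc _ ≤ K⁻¹ * (C * hn (r-1) f) := by gcongr; linarith
      _ = _ := by field_simp
  · rw [n2_smul, Complex.norm_real, Real.norm_of_nonneg hb0.le]
    have b2 := n2_Mu_le (hψt j) (C := 1) (fun v => by
      rw [mul_left_comm, ← brc_add, show -b + (b-2) = -2 by ring]; exact wcoord_le v j) (Op (fun ξ => kap * q j ξ) f)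
    have b3 := hbD j f
    calc _ ≤ b * (D j * hn (r-1) f) := by gcongr; linarith
      _ = _ := by ring

lemma S_all (m : ℝ) : S m := by
  have hup : ∀ n : ℕ, ∀ m, S m → S (m + 2 * n) := by
    intro n
    induction n with
    | zero => intro m h; simpa using h
    | succ n ih =>
      intro m h
      have := S_up (ih m h)
      rw [show m + 2 * ((n + 1 : ℕ) : ℝ) = m + 2 * n + 2 by push_cast; ring]
      exact this
  have hdn : ∀ n : ℕ, ∀ m, S m → S (m - 2 * n) := by
    intro n
    induction n with
    | zero => intro m h; simpa using h
    | succ n ih =>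
      intro m h
      have := S_down (ih m h)
      rw [show m - 2 * ((n + 1 : ℕ) : ℝ) = m - 2 * n - 2 by push_cast; ring]
      exact this
  have hbase : ∀ b, 0 ≤ b → b < 2 → S (-b) := by
    intro b h0 h2
    rcases h0.eq_or_lt with rfl | h0
    · simpa using S_zero
    · exact S_base h0 h2
  obtain ⟨k, hk⟩ : ∃ k : ℤ, k = ⌈m/2⌉ := ⟨_, rfl⟩
  have c1 : m/2 ≤ k := by rw [hk]; exact Int.le_ceil _
  have c2 : (k:ℝ) < m/2 + 1 := by rw [hk]; exact Int.ceil_lt_add_one _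
  have hb := hbase (2 * k - m) (by linarith) (by linarith)
  rcases Int.eq_nat_or_neg k with ⟨n, rfl | rfl⟩
  · have := hup n _ hb
    convert this using 1; push_cast; ring
  · have := hdn n _ hb
    convert this using 1; push_cast; ring

lemma l2norm_eq (f : 𝓢(V, ℂ)) : l2norm f = n2 f := by
  have h := n2_sq f
  have hm := f.memLp 2 (volume : Measure V)
  have hi : Integrable (fun v => ‖f v‖^2) := hm.integrable_norm_pow (by norm_num)
  have e : ∫⁻ v, ‖f v‖ₑ ^ 2 = ENNReal.ofReal (∫ v, ‖f v‖^2) := by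
    rw [ofReal_integral_eq_lintegral_ofReal hi (Filter.Eventually.of_forall fun v => by positivity)]
    congr 1; ext v
    rw [ENNReal.ofReal_pow (norm_nonneg _), ofReal_norm]
  rw [e, ENNReal.ofReal_eq_ofReal_iff (by positivity) (integral_nonneg fun v => by positivity)] at h
  rw [l2norm, ← h, ← Real.sqrt_eq_rpow, Real.sqrt_sq (n2_nonneg f)]

lemma Hnorm_eq (s : ℝ) (f : 𝓢(V, ℂ)) : Hnorm s f = hn s f := by
  rw [hn, ← l2norm_eq, Hnorm, l2norm]
  congr 2; ext ξ
  rw [Mu_apply (brc_htg s), norm_mul, mul_pow, norm_brc, jb_rpow, two_mul, br_add, fourier_coe]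
  ring

lemma besselOp_eq (r : ℝ) (f : 𝓢(V, ℂ)) : besselOp r f = Op (brc r) f := by
  ext v
  rw [besselOp, Op, fourierMultiplierCLM_apply, fourierInv_coe]
  refine congrArg (fun h : V → ℂ => 𝓕⁻ h v) (funext fun ξ => ?_)
  have := Mu_apply (brc_htg r) (𝓕 f) ξ
  rw [Mu] at this
  rw [this, fourier_coe]
  rfl

lemma final (m r : ℝ) :
    ∃ C > 0, ∀ u : 𝓢(V, ℂ),
      l2norm (fun v =>
          besselOp r (fun w => ((jb w ^ m : ℝ) : ℂ) * u w) v
            - ((jb v ^ m : ℝ) : ℂ) * besselOp r (u : V → ℂ) v)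
        ≤ C * Hnorm (r - 1) (fun v => ((jb v ^ m : ℝ) : ℂ) * u v) := by
  obtain ⟨C, hC, hb⟩ := S_all m r (brc r) (Sym.bra r)
  refine ⟨C + 1, by positivity, fun u => ?_⟩
  have e1 : (fun w => ((jb w ^ m : ℝ) : ℂ) * u w) = Mu (brc m) u := by
    ext w; rw [Mu_apply (brc_htg m), jb_rpow]; rfl
  have e2 : (fun v => besselOp r (Mu (brc m) u) v - ((jb v ^ m : ℝ) : ℂ) * besselOp r (u : V → ℂ) v)
      = (Op (brc r) (Mu (brc m) u) - Mu (brc m) (Op (brc r) (Mu (brc (-m)) (Mu (brc m) u))) : 𝓢(V, ℂ)) := by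
    ext v
    rw [← Mu_brc_add (-m) m 0 (by ring), Mu_brc_zero, sub_apply, Mu_apply (brc_htg m), besselOp_eq, besselOp_eq, jb_rpow]
    rfl
  rw [e1, e2, l2norm_eq, Hnorm_eq]
  have := hn_nonneg (r-1) (Mu (brc m) u)
  linarith [hb (Mu (brc m) u)]

end CBW

/-- commutator estimate
`‖[(1-Δ)^{r/2}, ⟨·⟩^m] u‖_{L²} ≤ C ‖⟨·⟩^m u‖_{H^{r-1}}` for Schwartz `u`. -/
theorem commutator_bessel_weight (m r : ℝ) (hr : 0 < r) :
    ∃ C > 0, ∀ u : 𝓢(V, ℂ),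
      l2norm (fun v =>
          besselOp r (fun w => ((jb w ^ m : ℝ) : ℂ) * u w) v
            - ((jb v ^ m : ℝ) : ℂ) * besselOp r (u : V → ℂ) v)
        ≤ C * Hnorm (r - 1) (fun v => ((jb v ^ m : ℝ) : ℂ) * u v) := by
  exact CBW.final m r
end
end

section
/- Let u be a Schwartz function on ℝ³ and 0 < s ≤ 1/2. For every m ∈ ℝ there is a constant C > 0 depending on m and s such that ‖[(1-Δ)^s, ⟨·⟩^m] u‖_{L²(ℝ³)} ≤ C ‖⟨·⟩^m u‖_{L²(ℝ³)}. -/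
open MeasureTheory Real
open scoped FourierTransform SchwartzMap
noncomputable section
/-- Rescaled heat kernel. -/
def gk (w : V) : ℝ := π ^ ((3:ℝ)/2) * rexp (-π^2 * ‖w‖^2)

lemma gk_nonneg (w : V) : 0 ≤ gk w := by unfold gk; positivity

lemma gk_continuous : Continuous gk := by unfold gk; fun_prop

lemma integrable_rexp_sq : Integrable (fun w : V => rexp (-‖w‖^2)) := by
  have h := (GaussianFourier.integrable_cexp_neg_mul_sq_norm_add (V := V) (b := 1) (by simp) 0 0).norm
  refine h.congr (Filter.Eventually.of_forall fun w => ?_)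
  simp only [Complex.norm_exp]
  congr 1
  simp [← Complex.ofReal_pow]

lemma gk_moment (N : ℕ) : Integrable (fun w : V => gk w * (1 + ‖w‖^2)^N) := by
  refine (integrable_rexp_sq.const_mul (π ^ ((3:ℝ)/2) * (N.factorial * rexp 1))).mono'
    (by have := gk_continuous; fun_prop) (Filter.Eventually.of_forall fun w => ?_)
  have h0 := gk_nonneg w
  rw [Real.norm_of_nonneg (by positivity)]
  have h1 : (1 + ‖w‖^2)^N ≤ N.factorial * rexp (1 + ‖w‖^2) := by
    have := Real.pow_div_factorial_le_exp (1 + ‖w‖^2) (by positivity) N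
    rw [div_le_iff₀ (by positivity)] at this
    linarith
  unfold gk
  calc _ ≤ π ^ ((3:ℝ)/2) * rexp (-π^2 * ‖w‖^2) * (N.factorial * rexp (1 + ‖w‖^2)) := by gcongr
    _ = π ^ ((3:ℝ)/2) * N.factorial * rexp (-π^2 * ‖w‖^2 + (1 + ‖w‖^2)) := by
      rw [Real.exp_add (-π^2 * ‖w‖^2)]; ring
    _ ≤ π ^ ((3:ℝ)/2) * N.factorial * rexp (1 + -‖w‖^2) := by
      refine mul_le_mul_of_nonneg_left (Real.exp_le_exp.2 ?_) (by positivity)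
      nlinarith [Real.pi_gt_three, sq_nonneg ‖w‖, mul_nonneg (sq_nonneg ‖w‖) (show 0 ≤ π^2 - 2 by nlinarith [Real.pi_gt_three])]
    _ = _ := by rw [Real.exp_add]; ring

lemma gk_integrable : Integrable gk := by simpa using gk_moment 0

lemma gauss_conv (φ : 𝓢(V, ℂ)) {t : ℝ} (ht : 0 < t) (x : V) :
    ∫ ξ, Complex.exp (↑(2 * π * inner ℝ ξ x) * Complex.I) * ((rexp (-t * ‖ξ‖^2) : ℝ) * 𝓕 (φ : V → ℂ) ξ)
      = ∫ w, (gk w : ℂ) * φ (x - √t • w) := by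
  have hb : 0 < (t : ℂ).re := by simpa
  have hi := GaussianFourier.integrable_cexp_neg_mul_sq_norm_add hb (2 * π * Complex.I) x
  have hF := VectorFourier.integral_fourierIntegral_smul_eq_flip (L := innerₗ V) (e := 𝐞)
    (μ := volume) (ν := volume)
    Real.continuous_fourierChar continuous_inner hi φ.integrable
  have e1 : ∫ ξ, Complex.exp (↑(2 * π * inner ℝ ξ x) * Complex.I) * ((rexp (-t * ‖ξ‖^2) : ℝ) * 𝓕 (φ : V → ℂ) ξ)
     = ∫ v, Complex.exp (-t * ‖v‖^2 + 2 * π * Complex.I * inner ℝ x v) • 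
        (VectorFourier.fourierIntegral 𝐞 volume (innerₗ V).flip φ v) := by
    congr 1; ext v
    rw [flip_innerₗ]
    change _ = _ • 𝓕 (φ : V → ℂ) v
    rw [← mul_assoc, smul_eq_mul]
    congr 1
    rw [Complex.ofReal_exp, ← Complex.exp_add, real_inner_comm]
    congr 1
    push_cast
    ring
  rw [e1, ← hF]
  have e2 : ∀ w, VectorFourier.fourierIntegral 𝐞 volume (innerₗ V) (fun v => Complex.exp (-t * ‖v‖^2 + 2 * π * Complex.I * inner ℝ x v)) w
      = (((π/t)^((3:ℝ)/2) * rexp (-π^2 * ‖x - w‖^2 / t) : ℝ) : ℂ) := by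
    intro w
    have := fourier_gaussian_innerProductSpace' hb x w
    refine this.trans ?_
    have : (Module.finrank ℝ V) = 3 := by simp
    rw [this]
    push_cast
    rw [Complex.ofReal_cpow (by positivity)]
    push_cast
    rfl
  simp only [e2]
  rw [← integral_sub_left_eq_self _ volume x]
  have hst : 0 < √t := Real.sqrt_pos.2 ht
  have := Measure.integral_comp_smul_of_nonneg volume (fun w : V => ((((π/t)^((3:ℝ)/2) * rexp (-π^2 * ‖w‖^2 / t) : ℝ) : ℂ)) • φ (x - w)) (√t) (hR := hst.le)
  have h3 : (Module.finrank ℝ V) = 3 := by simp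
  rw [h3, eq_inv_smul_iff₀ (by positivity)] at this
  simp only [sub_sub_cancel]
  rw [← this, ← integral_smul]
  congr 1; ext w
  rw [norm_smul, Real.norm_of_nonneg hst.le, mul_pow, Real.sq_sqrt ht.le]
  rw [smul_eq_mul, Complex.real_smul, ← mul_assoc, ← Complex.ofReal_mul]
  congr 2
  unfold gk
  rw [Real.div_rpow pi_pos.le ht.le, show (√t)^3 = t^((3:ℝ)/2) by
    rw [Real.sqrt_eq_rpow, ← Real.rpow_natCast, ← Real.rpow_mul ht.le]; norm_num]
  have : t^((3:ℝ)/2) ≠ 0 := by positivity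
  field_simp


lemma gk_hasFDerivAt (w : V) : HasFDerivAt gk ((-2 * π^2 * gk w) • innerSL ℝ w) w := by
  unfold gk
  have h := (((hasStrictFDerivAt_norm_sq w).hasFDerivAt.const_mul (-π^2)).exp).const_mul (π ^ ((3:ℝ)/2))
  refine h.congr_fderiv ?_
  ext v
  simp
  ring

lemma gk_moment1 : Integrable (fun w : V => gk w * ‖w‖) := by
  refine (gk_moment 1).mono' (by have := gk_continuous; fun_prop) (Filter.Eventually.of_forall fun w => ?_)
  have h0 := gk_nonneg w
  rw [Real.norm_of_nonneg (by positivity)]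
  gcongr
  nlinarith [sq_nonneg (‖w‖-1)]

lemma schwartz_bdd (φ : 𝓢(V, ℂ)) : ∃ C, ∀ x, ‖φ x‖ ≤ C := by
  obtain ⟨C, hC⟩ := φ.decay 0 0
  exact ⟨C, fun x => by simpa using hC.2 x⟩

lemma gk_mul_integrable (φ : 𝓢(V, ℂ)) (t : ℝ) (x : V) :
    Integrable (fun w => (gk w : ℂ) * φ (x - √t • w)) := by
  obtain ⟨C, hC⟩ := schwartz_bdd φ
  refine (gk_integrable.ofReal (𝕜 := ℂ)).mul_bdd (c := C) ?_ ?_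
  · have := φ.continuous
    exact (by fun_prop : Continuous fun w => φ (x - √t • w)).aestronglyMeasurable
  · exact Filter.Eventually.of_forall fun w => hC _

lemma gk_inner_mul_integrable (φ : 𝓢(V, ℂ)) (t : ℝ) (x e : V) :
    Integrable (fun w => ((gk w * inner ℝ w e : ℝ) : ℂ) * φ (x - √t • w)) := by
  obtain ⟨C, hC⟩ := schwartz_bdd φ
  refine Integrable.mul_bdd (c := C) ?_ ?_ ?_
  · suffices h : Integrable (fun w : V => gk w * inner ℝ w e) from h.ofReal (𝕜 := ℂ)
    refine (gk_moment1.mul_const ‖e‖).mono' (by have := gk_continuous; fun_prop) (Filter.Eventually.of_forall fun w => ?_)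
    rw [norm_mul, Real.norm_of_nonneg (gk_nonneg w), mul_assoc]
    have := gk_nonneg w
    gcongr
    exact norm_inner_le_norm w e
  · have := φ.continuous
    exact (by fun_prop : Continuous fun w => φ (x - √t • w)).aestronglyMeasurable
  · exact Filter.Eventually.of_forall fun w => hC _

lemma gauss_conv_deriv (φ : 𝓢(V, ℂ)) {t : ℝ} (ht : 0 < t) (x e : V) :
    ∫ ξ, Complex.exp (↑(2 * π * inner ℝ ξ x) * Complex.I) *
        ((inner ℝ ξ e * rexp (-t * ‖ξ‖^2) : ℝ) * 𝓕 (φ : V → ℂ) ξ)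
      = (π * Complex.I / √t) * ∫ w, ((gk w * inner ℝ w e : ℝ) : ℂ) * φ (x - √t • w) := by
  have hst : 0 < √t := Real.sqrt_pos.2 ht
  have hstc : (√t : ℂ) ≠ 0 := by exact_mod_cast hst.ne'
  have hpi : (π : ℂ) ≠ 0 := by exact_mod_cast pi_ne_zero
  have h1 := gauss_conv (LineDeriv.lineDerivOp e φ) ht x
  have h2 : ∀ ξ, 𝓕 ((LineDeriv.lineDerivOp e φ : 𝓢(V, ℂ)) : V → ℂ) ξ = (2 * π * Complex.I) * (inner ℝ ξ e * 𝓕 (φ : V → ℂ) ξ) := by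
    intro ξ
    rw [← SchwartzMap.fourier_coe, SchwartzMap.fourier_lineDerivOp_eq]
    have : (inner ℝ · e : V → ℝ).HasTemperateGrowth := ((innerSL ℝ).flip e).hasTemperateGrowth
    simp [this]
    exact Or.inl rfl
  have h3 : ∫ ξ, Complex.exp (↑(2 * π * inner ℝ ξ x) * Complex.I) *
        ((inner ℝ ξ e * rexp (-t * ‖ξ‖^2) : ℝ) * 𝓕 (φ : V → ℂ) ξ)
      = (2 * π * Complex.I)⁻¹ * ∫ w, (gk w : ℂ) * (LineDeriv.lineDerivOp e φ : 𝓢(V, ℂ)) (x - √t • w) := by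
    rw [← h1, ← integral_const_mul]
    congr 1; ext ξ
    rw [h2]
    push_cast
    field_simp
  rw [h3]
  have hd : ∀ w, HasFDerivAt (fun w => φ (x - √t • w)) ((fderiv ℝ φ (x - √t • w)).comp (-(√t • ContinuousLinearMap.id ℝ V))) w := by
    intro w
    refine HasFDerivAt.comp w (φ.differentiableAt.hasFDerivAt) ?_
    exact ((hasFDerivAt_id w).const_smul (√t)).const_sub x
  have hgd : ∀ w, HasFDerivAt (fun w => (gk w : ℂ)) (Complex.ofRealCLM.comp ((-2 * π^2 * gk w) • innerSL ℝ w)) w :=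
    fun w => Complex.ofRealCLM.hasFDerivAt.comp w (gk_hasFDerivAt w)
  have f1 : ∀ w, fderiv ℝ (fun w => φ (x - √t • w)) w e = -(√t : ℂ) * (LineDeriv.lineDerivOp e φ : 𝓢(V, ℂ)) (x - √t • w) := by
    intro w
    rw [(hd w).fderiv, SchwartzMap.lineDerivOp_apply_eq_fderiv]
    simp
  have f2 : ∀ w, fderiv ℝ (fun w => (gk w : ℂ)) w e = (-2 * π^2 : ℂ) * ((gk w * inner ℝ w e : ℝ) : ℂ) := by
    intro w
    rw [(hgd w).fderiv]
    simp
    ring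
  have key := integral_mul_fderiv_eq_neg_fderiv_mul_of_integrable (μ := volume) (v := e) (f := fun w => (gk w : ℂ)) (g := fun w => φ (x - √t • w))
    (by
      simp only [f2]
      refine ((gk_inner_mul_integrable φ t x e).const_mul (-2 * π^2 : ℂ)).congr (Filter.Eventually.of_forall fun w => ?_)
      simp only []
      ring)
    (by
      simp only [f1]
      refine ((gk_mul_integrable (LineDeriv.lineDerivOp e φ) t x).const_mul (-(√t : ℂ))).congr (Filter.Eventually.of_forall fun w => ?_)
      simp only []
      ring)
    (gk_mul_integrable φ t x)
    (fun w _ => (hgd w).differentiableAt) (fun w _ => (hd w).differentiableAt)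
  simp only [f1, f2] at key
  have k1 : ∫ w, (gk w : ℂ) * (-(√t : ℂ) * (LineDeriv.lineDerivOp e φ : 𝓢(V, ℂ)) (x - √t • w)) = -(√t : ℂ) * ∫ w, (gk w : ℂ) * (LineDeriv.lineDerivOp e φ : 𝓢(V, ℂ)) (x - √t • w) := by
    rw [← integral_const_mul]; congr 1; ext w; ring
  have k2 : ∫ w, (-2 * π^2 : ℂ) * ((gk w * inner ℝ w e : ℝ) : ℂ) * φ (x - √t • w) = (-2 * π^2 : ℂ) * ∫ w, ((gk w * inner ℝ w e : ℝ) : ℂ) * φ (x - √t • w) := by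
    rw [← integral_const_mul]; congr 1; ext w; ring
  rw [k1, k2] at key
  rw [inv_mul_eq_iff_eq_mul₀ (by simp)]
  field_simp
  linear_combination (-1 : ℂ) * key - 2 * π^2 * (∫ w, ((gk w * inner ℝ w e : ℝ) : ℂ) * φ (x - √t • w)) * Complex.I_sq


def kap (s : ℝ) : ℝ := ∫ t in Set.Ioi (0:ℝ), t ^ (-1-s) * (1 - rexp (-t))

lemma kap_integrand_nonneg (s a : ℝ) (ha : 0 ≤ a) {t : ℝ} (ht : 0 < t) :
    0 ≤ t ^ (-1-s) * (1 - rexp (-(a*t))) := by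
  have : rexp (-(a*t)) ≤ 1 := Real.exp_le_one_iff.2 (by nlinarith [mul_nonneg ha ht.le])
  have := sub_nonneg.2 this
  positivity

lemma kap_integrable {s : ℝ} (hs0 : 0 < s) (hs : s ≤ 1/2) :
    IntegrableOn (fun t : ℝ => t ^ (-1-s) * (1 - rexp (-t))) (Set.Ioi 0) := by
  have hm : Measurable (fun t : ℝ => t ^ (-1-s) * (1 - rexp (-t))) := by fun_prop
  rw [← Set.Ioc_union_Ioi_eq_Ioi (zero_le_one' ℝ)]
  refine IntegrableOn.union ?_ ?_
  · have h1 : IntegrableOn (fun t : ℝ => t ^ (-s)) (Set.Ioc 0 1) := by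
      rw [← intervalIntegrable_iff_integrableOn_Ioc_of_le zero_le_one]
      exact intervalIntegral.intervalIntegrable_rpow' (by linarith)
    refine h1.mono' hm.aestronglyMeasurable ?_
    refine (ae_restrict_iff' measurableSet_Ioc).2 (Filter.Eventually.of_forall fun t ht => ?_)
    have h0 := kap_integrand_nonneg s 1 zero_le_one ht.1
    rw [one_mul] at h0
    rw [Real.norm_of_nonneg h0]
    have : 1 - rexp (-t) ≤ t := by linarith [Real.add_one_le_exp (-t)]
    calc _ ≤ t ^ (-1-s) * t := mul_le_mul_of_nonneg_left this (Real.rpow_nonneg ht.1.le _)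
      _ = t ^ (-s) := by
        rw [← Real.rpow_add_one ht.1.ne']; congr 1; ring
  · have h1 := integrableOn_Ioi_rpow_of_lt (a := -1-s) (by linarith) (zero_lt_one' ℝ)
    refine h1.mono' hm.aestronglyMeasurable ?_
    refine (ae_restrict_iff' measurableSet_Ioi).2 (Filter.Eventually.of_forall fun t ht => ?_)
    have ht' : 0 < t := lt_trans zero_lt_one ht
    have h0 := kap_integrand_nonneg s 1 zero_le_one ht'
    rw [one_mul] at h0
    rw [Real.norm_of_nonneg h0]
    have : 1 - rexp (-t) ≤ 1 := by linarith [Real.exp_pos (-t)]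
    calc _ ≤ t ^ (-1-s) * 1 := mul_le_mul_of_nonneg_left this (Real.rpow_nonneg ht'.le _)
      _ = _ := mul_one _

lemma kap_pos {s : ℝ} (hs0 : 0 < s) (hs : s ≤ 1/2) : 0 < kap s := by
  unfold kap
  rw [setIntegral_pos_iff_support_of_nonneg_ae _ (kap_integrable hs0 hs)]
  · have : Set.Ioi (0:ℝ) ⊆ Function.support (fun t : ℝ => t ^ (-1-s) * (1 - rexp (-t))) ∩ Set.Ioi 0 := by
      intro t ht
      refine ⟨?_, ht⟩
      have ht' : 0 < t := ht
      have : rexp (-t) < 1 := by simpa using ht'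
      have := sub_pos.2 this
      rw [Function.mem_support]
      positivity
    refine lt_of_lt_of_le ?_ (measure_mono this)
    simp
  · refine (ae_restrict_iff' measurableSet_Ioi).2 (Filter.Eventually.of_forall fun t ht => ?_)
    simpa using kap_integrand_nonneg s 1 zero_le_one ht

lemma kap_scale_fun (s : ℝ) {a : ℝ} (ha : 0 < a) {t : ℝ} (ht : 0 < t) :
    t ^ (-1-s) * (1 - rexp (-(a*t))) = a^(1+s) * ((a*t) ^ (-1-s) * (1 - rexp (-(a*t)))) := by
  rw [Real.mul_rpow ha.le ht.le, ← mul_assoc, ← mul_assoc, ← Real.rpow_add ha]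
  simp

lemma kap_scale {s : ℝ} (hs0 : 0 < s) (hs : s ≤ 1/2) {a : ℝ} (ha : 0 < a) :
    IntegrableOn (fun t : ℝ => t ^ (-1-s) * (1 - rexp (-(a*t)))) (Set.Ioi 0) ∧
    ∫ t in Set.Ioi (0:ℝ), t ^ (-1-s) * (1 - rexp (-(a*t))) = kap s * a ^ s := by
  have hi := (integrableOn_Ioi_comp_mul_left_iff (fun t : ℝ => t ^ (-1-s) * (1 - rexp (-t))) 0 ha).2
    (by simpa using kap_integrable hs0 hs)
  constructor
  · refine (hi.const_mul (a^(1+s))).congr ?_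
    refine (ae_restrict_iff' measurableSet_Ioi).2 (Filter.Eventually.of_forall fun t ht => ?_)
    exact (kap_scale_fun s ha ht).symm
  · rw [setIntegral_congr_fun measurableSet_Ioi (fun t ht => kap_scale_fun s ha ht), integral_const_mul]
    have := integral_comp_mul_left_Ioi (fun t : ℝ => t ^ (-1-s) * (1 - rexp (-t))) 0 ha
    simp only [mul_zero, smul_eq_mul] at this
    rw [this, show (∫ (x : ℝ) in Set.Ioi 0, x ^ (-1 - s) * (1 - rexp (-x))) = kap s from rfl,
      Real.rpow_add ha, Real.rpow_one]
    field_simp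

lemma fub (k : ℝ → V → ℝ) (hk : Measurable (fun p : V × ℝ => k p.2 p.1))
    (hk0 : ∀ t > 0, ∀ ξ, 0 ≤ k t ξ) (K : V → ℝ)
    (hki : ∀ ξ, IntegrableOn (fun t => k t ξ) (Set.Ioi 0))
    (hK : ∀ ξ, ∫ t in Set.Ioi (0:ℝ), k t ξ = K ξ) (ψ : V → ℂ)
    (hψ : AEStronglyMeasurable ψ) (hKψ : Integrable (fun ξ => (K ξ : ℂ) * ψ ξ)) :
    IntegrableOn (fun t => ∫ ξ, (k t ξ : ℂ) * ψ ξ) (Set.Ioi 0) ∧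
    ∫ ξ, (K ξ : ℂ) * ψ ξ = ∫ t in Set.Ioi (0:ℝ), ∫ ξ, (k t ξ : ℂ) * ψ ξ := by
  have hm : AEStronglyMeasurable (fun p : V × ℝ => (k p.2 p.1 : ℂ) * ψ p.1)
      (volume.prod (volume.restrict (Set.Ioi (0:ℝ)))) := by
    refine AEStronglyMeasurable.mul ?_ hψ.comp_fst
    exact (Complex.measurable_ofReal.comp hk).aestronglyMeasurable
  have hIntg : Integrable (fun p : V × ℝ => (k p.2 p.1 : ℂ) * ψ p.1)
      (volume.prod (volume.restrict (Set.Ioi (0:ℝ)))) := by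
    rw [integrable_prod_iff hm]
    constructor
    · exact Filter.Eventually.of_forall fun ξ => by
        have h := ((hki ξ).ofReal (𝕜 := ℂ)).mul_const (ψ ξ)
        exact h
    · refine hKψ.norm.congr (Filter.Eventually.of_forall fun ξ => ?_)
      have : ∫ t in Set.Ioi (0:ℝ), ‖(k t ξ : ℂ) * ψ ξ‖ = ∫ t in Set.Ioi (0:ℝ), k t ξ * ‖ψ ξ‖ := by
        refine setIntegral_congr_fun measurableSet_Ioi fun t ht => ?_
        simp only [norm_mul, Complex.norm_real, Real.norm_of_nonneg (hk0 t ht ξ)]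
      simp only []
      rw [this, integral_mul_const, hK, norm_mul, Complex.norm_real, Real.norm_of_nonneg]
      rw [← hK]
      exact setIntegral_nonneg measurableSet_Ioi fun t ht => hk0 t ht ξ
  constructor
  · exact hIntg.integral_prod_right
  · rw [← integral_integral_swap hIntg]
    congr 1; ext ξ
    rw [integral_mul_const]
    congr 1
    rw [← hK]
    exact integral_ofReal.symm


lemma exp_norm_one (r : ℝ) : ‖Complex.exp ((r : ℂ) * Complex.I)‖ = 1 := Complex.norm_exp_ofReal_mul_I r

/-- Schwartz function multiplied by real function of temperate growth. -/
def smulS (g : V → ℝ) (φ : 𝓢(V, ℂ)) : 𝓢(V, ℂ) := SchwartzMap.smulLeftCLM ℂ g φ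

lemma smulS_apply {g : V → ℝ} (hg : g.HasTemperateGrowth) (φ : 𝓢(V, ℂ)) (x : V) :
    smulS g φ x = (g x : ℂ) * φ x := by
  simp [smulS, hg]

lemma fourier_coe' (φ : 𝓢(V, ℂ)) (ξ : V) : 𝓕 (φ : V → ℂ) ξ = (𝓕 φ : 𝓢(V, ℂ)) ξ := rfl

lemma mulS_integrable {g : V → ℝ} (hg : g.HasTemperateGrowth) (φ : 𝓢(V, ℂ)) (x : V) :
    Integrable (fun ξ => (g ξ : ℂ) * (Complex.exp (↑(2 * π * inner ℝ ξ x) * Complex.I) * φ ξ)) := by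
  have h := (smulS g φ).integrable (μ := volume)
  have h2 := h.bdd_mul (f := fun ξ => Complex.exp (↑(2 * π * inner ℝ ξ x) * Complex.I)) (c := 1)
    (by fun_prop) (Filter.Eventually.of_forall fun ξ => (exp_norm_one _).le)
  refine h2.congr (Filter.Eventually.of_forall fun ξ => ?_)
  simp only [smulS_apply hg]
  ring

lemma fourierInv_exp (φ : 𝓢(V, ℂ)) (x : V) :
    ∫ ξ, Complex.exp (↑(2 * π * inner ℝ ξ x) * Complex.I) * 𝓕 (φ : V → ℂ) ξ = φ x := by
  have h : 𝓕⁻ (𝓕 φ) x = φ x := by simp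
  rw [SchwartzMap.fourierInv_coe, Real.fourierInv_eq'] at h
  exact h

lemma bessel_repr {s : ℝ} (hs0 : 0 < s) (hs : s ≤ 1/2) (φ : 𝓢(V, ℂ)) (x : V) :
    IntegrableOn (fun t : ℝ => ((t ^ (-1-s) : ℝ) : ℂ) * (φ x - (rexp (-t) : ℝ) * ∫ w, (gk w : ℂ) * φ (x - √t • w))) (Set.Ioi 0) ∧
    (kap s : ℂ) * besselOp (2*s) φ x = ∫ t in Set.Ioi (0:ℝ),
      ((t ^ (-1-s) : ℝ) : ℂ) * (φ x - (rexp (-t) : ℝ) * ∫ w, (gk w : ℂ) * φ (x - √t • w)) := by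
  have hT : (fun ξ : V => (1 + ‖ξ‖^2) ^ s).HasTemperateGrowth := by fun_prop
  have hpos : ∀ ξ : V, 0 < 1 + ‖ξ‖^2 := fun ξ => by positivity
  obtain ⟨h1, h2⟩ := fub (fun t ξ => t ^ (-1-s) * (1 - rexp (-((1 + ‖ξ‖^2) * t)))) (by fun_prop)
    (fun t ht ξ => kap_integrand_nonneg s (1 + ‖ξ‖^2) (hpos ξ).le ht)
    (fun ξ => kap s * (1 + ‖ξ‖^2) ^ s)
    (fun ξ => (kap_scale hs0 hs (a := 1 + ‖ξ‖^2) (hpos ξ)).1)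
    (fun ξ => (kap_scale hs0 hs (a := 1 + ‖ξ‖^2) (hpos ξ)).2)
    (fun ξ => Complex.exp (↑(2 * π * inner ℝ ξ x) * Complex.I) * 𝓕 (φ : V → ℂ) ξ)
    (by
      simp only [fourier_coe']
      exact (Continuous.mul (by fun_prop) (𝓕 φ : 𝓢(V, ℂ)).continuous).aestronglyMeasurable)
    (by
      simp only [fourier_coe']
      refine ((mulS_integrable hT (𝓕 φ) x).const_mul (kap s : ℂ)).congr (Filter.Eventually.of_forall fun ξ => ?_)
      push_cast
      ring)
  have hone : Integrable (fun ξ => Complex.exp (↑(2 * π * inner ℝ ξ x) * Complex.I) * 𝓕 (φ : V → ℂ) ξ) := by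
    have h := mulS_integrable (g := fun _ => (1:ℝ)) (Function.HasTemperateGrowth.const 1) (𝓕 φ) x
    refine h.congr (Filter.Eventually.of_forall fun ξ => ?_)
    simp only [Complex.ofReal_one, one_mul, fourier_coe']
  have hin : ∀ t ∈ Set.Ioi (0:ℝ), ∫ ξ, ((t ^ (-1-s) * (1 - rexp (-((1 + ‖ξ‖^2) * t))) : ℝ) : ℂ) *
      (Complex.exp (↑(2 * π * inner ℝ ξ x) * Complex.I) * 𝓕 (φ : V → ℂ) ξ)
      = ((t ^ (-1-s) : ℝ) : ℂ) * (φ x - (rexp (-t) : ℝ) * ∫ w, (gk w : ℂ) * φ (x - √t • w)) := by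
    intro t ht
    have ht' : 0 < t := ht
    have h3 : Integrable (fun ξ => Complex.exp (↑(2 * π * inner ℝ ξ x) * Complex.I) * ((rexp (-t * ‖ξ‖^2) : ℝ) * 𝓕 (φ : V → ℂ) ξ)) := by
      have h2 := hone.bdd_mul (f := fun ξ => ((rexp (-t * ‖ξ‖^2) : ℝ) : ℂ)) (c := 1)
        (by fun_prop) (Filter.Eventually.of_forall fun ξ => by
          rw [Complex.norm_real, Real.norm_of_nonneg (Real.exp_pos _).le]
          exact Real.exp_le_one_iff.2 (by nlinarith [mul_nonneg ht'.le (sq_nonneg ‖ξ‖)]))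
      refine h2.congr (Filter.Eventually.of_forall fun ξ => ?_)
      simp only []
      ring
    have h4 := integral_sub hone (h3.const_mul ((rexp (-t) : ℝ) : ℂ))
    rw [integral_const_mul, gauss_conv φ ht x, fourierInv_exp φ x] at h4
    rw [← h4, ← integral_const_mul]
    refine integral_congr_ae (Filter.Eventually.of_forall fun ξ => ?_)
    have h5 : rexp (-((1 + ‖ξ‖^2) * t)) = rexp (-t) * rexp (-t * ‖ξ‖^2) := by
      rw [← Real.exp_add]; congr 1; ring
    simp only [h5, Complex.ofReal_mul, Complex.ofReal_sub, Complex.ofReal_one]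
    ring
  constructor
  · exact h1.congr_fun hin measurableSet_Ioi
  · rw [← setIntegral_congr_fun measurableSet_Ioi hin, ← h2]
    unfold besselOp
    rw [Real.fourierInv_eq', ← integral_const_mul]
    congr 1; ext ξ
    rw [show 2 * s / 2 = s by ring, smul_eq_mul]
    push_cast
    ring

/-- First-order multiplier. -/
def bop (s : ℝ) (e : V) (φ : 𝓢(V, ℂ)) : 𝓢(V, ℂ) :=
  𝓕⁻ (smulS (fun ξ => inner ℝ ξ e * (1 + ‖ξ‖^2) ^ (s-1)) (𝓕 φ))

lemma bsym_temp (s : ℝ) (e : V) : (fun ξ : V => inner ℝ ξ e * (1 + ‖ξ‖^2) ^ (s-1)).HasTemperateGrowth := by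
  have : (inner ℝ · e : V → ℝ).HasTemperateGrowth := ((innerSL ℝ).flip e).hasTemperateGrowth
  fun_prop

lemma bop_repr {s : ℝ} (hs0 : 0 < s) (hs : s ≤ 1/2) (φ : 𝓢(V, ℂ)) (x e : V) :
    IntegrableOn (fun t : ℝ => ((t ^ (-1-s) * rexp (-t) : ℝ) : ℂ) * ∫ w, ((gk w * inner ℝ (√t • w) e : ℝ) : ℂ) * φ (x - √t • w)) (Set.Ioi 0) ∧
    (Real.Gamma (1-s) / (π * Complex.I) : ℂ) * bop s e φ x = ∫ t in Set.Ioi (0:ℝ),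
      ((t ^ (-1-s) * rexp (-t) : ℝ) : ℂ) * ∫ w, ((gk w * inner ℝ (√t • w) e : ℝ) : ℂ) * φ (x - √t • w) := by
  have hpi : (π : ℂ) ≠ 0 := by exact_mod_cast pi_ne_zero
  have hG : 0 < Real.Gamma (1-s) := Real.Gamma_pos_of_pos (by linarith)
  have hT := bsym_temp s e
  have hsc : ∀ ξ : V, ∫ t in Set.Ioi (0:ℝ), t ^ (-s) * rexp (-((1 + ‖ξ‖^2) * t)) = (1 + ‖ξ‖^2) ^ (s-1) * Real.Gamma (1-s) := by
    intro ξ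
    have := Real.integral_rpow_mul_exp_neg_mul_Ioi (a := 1 - s) (r := 1 + ‖ξ‖^2) (by linarith) (by positivity)
    rw [show 1 - s - 1 = -s by ring] at this
    rw [this, one_div, Real.inv_rpow (by positivity), ← Real.rpow_neg (by positivity), neg_sub]
  obtain ⟨h1, h2⟩ := fub (fun t ξ => t ^ (-s) * rexp (-((1 + ‖ξ‖^2) * t))) (by fun_prop)
    (fun t ht ξ => by have ht' : 0 < t := ht; positivity)
    (fun ξ => (1 + ‖ξ‖^2) ^ (s-1) * Real.Gamma (1-s))
    (fun ξ => by
      by_contra hcon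
      have := hsc ξ
      rw [integral_undef hcon] at this
      have : 0 < (1 + ‖ξ‖^2) ^ (s-1) * Real.Gamma (1-s) := by positivity
      linarith)
    hsc
    (fun ξ => Complex.exp (↑(2 * π * inner ℝ ξ x) * Complex.I) * (inner ℝ ξ e * 𝓕 (φ : V → ℂ) ξ))
    (by
      simp only [fourier_coe']
      exact (Continuous.mul (by fun_prop) (Continuous.mul (by fun_prop) (𝓕 φ : 𝓢(V, ℂ)).continuous)).aestronglyMeasurable)
    (by
      simp only [fourier_coe']
      refine ((mulS_integrable hT (𝓕 φ) x).const_mul (Real.Gamma (1-s) : ℂ)).congr (Filter.Eventually.of_forall fun ξ => ?_)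
      push_cast
      ring)
  have hin : ∀ t ∈ Set.Ioi (0:ℝ), ∫ ξ, ((t ^ (-s) * rexp (-((1 + ‖ξ‖^2) * t)) : ℝ) : ℂ) *
      (Complex.exp (↑(2 * π * inner ℝ ξ x) * Complex.I) * (inner ℝ ξ e * 𝓕 (φ : V → ℂ) ξ))
      = (π * Complex.I) * (((t ^ (-1-s) * rexp (-t) : ℝ) : ℂ) * ∫ w, ((gk w * inner ℝ (√t • w) e : ℝ) : ℂ) * φ (x - √t • w)) := by
    intro t ht
    have ht' : 0 < t := ht
    have hst : 0 < √t := Real.sqrt_pos.2 ht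
    have hstc : (√t : ℂ) ≠ 0 := by exact_mod_cast hst.ne'
    have e1 : ∫ w, ((gk w * inner ℝ (√t • w) e : ℝ) : ℂ) * φ (x - √t • w) = √t * ∫ w, ((gk w * inner ℝ w e : ℝ) : ℂ) * φ (x - √t • w) := by
      rw [← integral_const_mul]
      congr 1; ext w
      rw [real_inner_smul_left]; push_cast; ring
    have e2 : ∫ w, ((gk w * inner ℝ w e : ℝ) : ℂ) * φ (x - √t • w) = (√t / (π * Complex.I)) * ∫ ξ, Complex.exp (↑(2 * π * inner ℝ ξ x) * Complex.I) *
        ((inner ℝ ξ e * rexp (-t * ‖ξ‖^2) : ℝ) * 𝓕 (φ : V → ℂ) ξ) := by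
      rw [gauss_conv_deriv φ ht x e]
      field_simp
    have e3 : t ^ (-s) = t ^ (-1-s) * √t * √t := by
      rw [mul_assoc, Real.mul_self_sqrt ht'.le, ← Real.rpow_add_one ht'.ne']; congr 1; ring
    rw [e1, e2]
    rw [show (π * Complex.I) * (((t ^ (-1-s) * rexp (-t) : ℝ) : ℂ) * (√t * ((√t / (π * Complex.I)) * ∫ ξ, Complex.exp (↑(2 * π * inner ℝ ξ x) * Complex.I) *
        ((inner ℝ ξ e * rexp (-t * ‖ξ‖^2) : ℝ) * 𝓕 (φ : V → ℂ) ξ)))) = ((t ^ (-s) * rexp (-t) : ℝ) : ℂ) * ∫ ξ, Complex.exp (↑(2 * π * inner ℝ ξ x) * Complex.I) *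
        ((inner ℝ ξ e * rexp (-t * ‖ξ‖^2) : ℝ) * 𝓕 (φ : V → ℂ) ξ) by
      rw [e3]; push_cast; field_simp]
    rw [← integral_const_mul]
    congr 1; ext ξ
    rw [show -((1 + ‖ξ‖^2) * t) = -t + -t * ‖ξ‖^2 by ring, Real.exp_add]
    push_cast
    ring
  constructor
  · have := (h1.congr_fun hin measurableSet_Ioi).const_mul ((π * Complex.I)⁻¹)
    refine this.congr (Filter.Eventually.of_forall fun t => ?_)
    simp only []
    rw [inv_mul_cancel_left₀ (by simp)]
  · rw [setIntegral_congr_fun measurableSet_Ioi hin, integral_const_mul] at h2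
    rw [div_mul_eq_mul_div, div_eq_iff (by simp), mul_comm (∫ t in Set.Ioi (0:ℝ), _), ← h2]
    unfold bop
    rw [SchwartzMap.fourierInv_coe, Real.fourierInv_eq', ← integral_const_mul]
    congr 1; ext ξ
    rw [smulS_apply hT, smul_eq_mul, fourier_coe']
    push_cast
    ring


lemma peetre {a b c r : ℝ} (ha : 0 < a) (hb : 0 < b) (hc : 1 ≤ c) (h1 : a ≤ c * b) (h2 : b ≤ c * a) :
    a ^ r ≤ c ^ |r| * b ^ r := by
  have hc0 : 0 < c := by linarith
  rcases le_total 0 r with hr | hr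
  · rw [abs_of_nonneg hr, ← Real.mul_rpow hc0.le hb.le]
    exact Real.rpow_le_rpow ha.le h1 hr
  · rw [abs_of_nonpos hr]
    have h3 : b / c ≤ a := by rw [div_le_iff₀ hc0]; linarith
    have h4 := Real.rpow_le_rpow_of_nonpos (by positivity) h3 hr
    rw [Real.div_rpow hb.le hc0.le] at h4
    rw [Real.rpow_neg hc0.le, inv_mul_eq_div]
    exact h4

lemma taylor2 (f f1 f2 : ℝ → ℝ) (M : ℝ) (h1 : ∀ τ, HasDerivAt f (f1 τ) τ)
    (h2 : ∀ τ, HasDerivAt f1 (f2 τ) τ) (hM : ∀ τ ∈ Set.Icc (0:ℝ) 1, |f2 τ| ≤ M) :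
    |f 1 - f 0 - f1 0| ≤ M := by
  have hM0 : 0 ≤ M := (abs_nonneg _).trans (hM 0 (by simp))
  have hA : ∀ τ ∈ Set.Icc (0:ℝ) 1, |f1 τ - f1 0| ≤ M := by
    intro τ hτ
    have := (convex_Icc (0:ℝ) 1).norm_image_sub_le_of_norm_hasDerivWithin_le
      (f := f1) (f' := f2) (C := M) (fun x _ => (h2 x).hasDerivWithinAt) hM (x := 0) (y := τ) (by simp) hτ
    refine this.trans ?_
    rw [sub_zero, Real.norm_of_nonneg hτ.1]
    nlinarith [hτ.2]
  have := (convex_Icc (0:ℝ) 1).norm_image_sub_le_of_norm_hasDerivWithin_le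
      (f := fun τ => f τ - τ * f1 0) (f' := fun τ => f1 τ - f1 0) (C := M)
      (fun x _ => ((h1 x).sub (by simpa using (hasDerivAt_id x).mul_const (f1 0))).hasDerivWithinAt) hA (x := 0) (y := 1) (by simp) (by simp)
  simp at this
  rw [show f 1 - f 0 - f1 0 = f 1 - f1 0 - f 0 by ring]
  exact this

lemma weight_taylor (r : ℝ) : ∃ C ≥ 0, ∃ N : ℕ, ∀ y h : V,
    |(1 + ‖y + h‖^2) ^ r - (1 + ‖y‖^2) ^ r - 2 * r * (1 + ‖y‖^2) ^ (r-1) * inner ℝ y h|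
      ≤ C * (‖h‖^2 * (1 + ‖h‖^2)^N) * (1 + ‖y‖^2) ^ r := by
  refine ⟨(|r * (r-1)| * 4 + |r| * 2) * 2 ^ |r|, by positivity, ⌈|r|⌉₊, fun y h => ?_⟩
  set q : ℝ → ℝ := fun τ => 1 + ‖y‖^2 + 2 * τ * inner ℝ y h + τ^2 * ‖h‖^2 with hq
  have hqn : ∀ τ, q τ = 1 + ‖y + τ • h‖^2 := by
    intro τ
    rw [norm_add_sq_real, real_inner_smul_right, norm_smul, mul_pow, Real.norm_eq_abs, sq_abs]
    simp only [hq]; ring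
  have hq1 : ∀ τ, 1 ≤ q τ := fun τ => by rw [hqn]; nlinarith [sq_nonneg ‖y + τ • h‖]
  have hq0 : ∀ τ, 0 < q τ := fun τ => by linarith [hq1 τ]
  set q1 : ℝ → ℝ := fun τ => 2 * inner ℝ y h + 2 * τ * ‖h‖^2 with hq1d
  have hqd : ∀ τ, HasDerivAt q (q1 τ) τ := by
    intro τ
    have h1 := ((hasDerivAt_id τ).const_mul 2).mul_const (inner ℝ y h)
    have h2 := (hasDerivAt_pow 2 τ).mul_const (‖h‖^2)
    have h3 := (h1.const_add (1 + ‖y‖^2)).add h2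
    refine (h3.congr_deriv ?_)
    simp [hq1d]
  have hq1dd : ∀ τ, HasDerivAt q1 (2 * ‖h‖^2) τ := by
    intro τ
    have h1 := (((hasDerivAt_id τ).const_mul 2).mul_const (‖h‖^2)).const_add (2 * inner ℝ y h)
    refine (h1.congr_deriv ?_)
    simp
  have hF := taylor2 (fun τ => q τ ^ r) (fun τ => q1 τ * r * q τ ^ (r-1))
    (fun τ => 2 * ‖h‖^2 * r * q τ ^ (r-1) + q1 τ * r * (q1 τ * (r-1) * q τ ^ (r-1-1)))
    ((|r * (r-1)| * 4 + |r| * 2) * 2 ^ |r| * (‖h‖^2 * (1 + ‖h‖^2)^⌈|r|⌉₊) * (1 + ‖y‖^2) ^ r)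
    (fun τ => (hqd τ).rpow_const (Or.inl (hq0 τ).ne'))
    (fun τ => ((hq1dd τ).mul_const r).mul ((hqd τ).rpow_const (Or.inl (hq0 τ).ne')))
    ?_
  · have e0 : q 0 = 1 + ‖y‖^2 := by simp [hq]
    have e1 : q 1 = 1 + ‖y + h‖^2 := by rw [hqn]; simp
    have e2 : q1 0 = 2 * inner ℝ y h := by simp [hq1d]
    simp only [e0, e1, e2] at hF
    refine le_trans (le_of_eq ?_) hF
    congr 1; ring
  · intro τ hτ
    have hqq := hq0 τ
    have hcs : (q1 τ)^2 ≤ 4 * ‖h‖^2 * q τ := by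
      have e : q1 τ = 2 * inner ℝ (y + τ • h) h := by
        rw [inner_add_left, real_inner_smul_left, real_inner_self_eq_norm_sq]; simp only [hq1d]; ring
      have h1 := abs_real_inner_le_norm (y + τ • h) h
      have h2 : (inner ℝ (y + τ • h) h)^2 ≤ (‖y + τ • h‖ * ‖h‖)^2 := by
        rw [← sq_abs]; gcongr
      rw [e, hqn]
      nlinarith [sq_nonneg ‖h‖]
    have hpr : q τ ^ (r-1) ≤ q τ ^ r := Real.rpow_le_rpow_of_exponent_le (hq1 τ) (by linarith)
    have hpe : q τ * q τ ^ (r-1-1) = q τ ^ (r-1) := by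
      rw [mul_comm, ← Real.rpow_add_one hqq.ne']; congr 1; ring
    have hτh : ‖τ • h‖^2 ≤ ‖h‖^2 := by
      rw [norm_smul, Real.norm_of_nonneg hτ.1]
      have := norm_nonneg h
      have : τ * ‖h‖ ≤ ‖h‖ := by nlinarith [hτ.2]
      have : 0 ≤ τ * ‖h‖ := mul_nonneg hτ.1 (norm_nonneg h)
      gcongr
    have hpee : q τ ^ r ≤ (2 * (1 + ‖h‖^2)) ^ |r| * (1 + ‖y‖^2) ^ r := by
      refine peetre hqq (by positivity) (by nlinarith [sq_nonneg ‖h‖]) ?_ ?_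
      · rw [hqn]
        have : ‖y + τ • h‖^2 ≤ 2 * ‖y‖^2 + 2 * ‖τ • h‖^2 := by
          have := norm_add_le y (τ • h)
          have := norm_nonneg (y + τ • h)
          nlinarith [sq_nonneg (‖y‖ - ‖τ • h‖)]
        nlinarith [mul_nonneg (sq_nonneg ‖h‖) (sq_nonneg ‖y‖)]
      · rw [hqn]
        have : ‖y‖^2 ≤ 2 * ‖y + τ • h‖^2 + 2 * ‖τ • h‖^2 := by
          have := norm_sub_le (y + τ • h) (τ • h)
          rw [add_sub_cancel_right] at this
          have := norm_nonneg y
          nlinarith [sq_nonneg (‖y + τ • h‖ - ‖τ • h‖)]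
        nlinarith [mul_nonneg (sq_nonneg ‖h‖) (sq_nonneg ‖y + τ • h‖)]
    have hN : (1 + ‖h‖^2) ^ |r| ≤ (1 + ‖h‖^2) ^ ⌈|r|⌉₊ := by
      rw [← Real.rpow_natCast _ ⌈|r|⌉₊]
      have h1 : 1 ≤ 1 + ‖h‖^2 := by nlinarith [sq_nonneg ‖h‖]
      exact Real.rpow_le_rpow_of_exponent_le h1 (Nat.le_ceil _)
    have hqr : 0 ≤ q τ ^ (r-1) := by positivity
    have hqr2 : 0 ≤ q τ ^ (r-1-1) := by positivity
    calc |2 * ‖h‖^2 * r * q τ ^ (r-1) + q1 τ * r * (q1 τ * (r-1) * q τ ^ (r-1-1))|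
        ≤ |2 * ‖h‖^2 * r * q τ ^ (r-1)| + |q1 τ * r * (q1 τ * (r-1) * q τ ^ (r-1-1))| := abs_add_le _ _
      _ = |r| * 2 * ‖h‖^2 * q τ ^ (r-1) + |r * (r-1)| * ((q1 τ)^2 * q τ ^ (r-1-1)) := by
        rw [show q1 τ * r * (q1 τ * (r-1) * q τ ^ (r-1-1)) = (r * (r-1)) * ((q1 τ)^2 * q τ ^ (r-1-1)) by ring,
          abs_mul (r * (r-1)), abs_of_nonneg (a := (q1 τ)^2 * q τ ^ (r-1-1)) (by positivity),
          show 2 * ‖h‖^2 * r * q τ ^ (r-1) = r * (2 * ‖h‖^2 * q τ ^ (r-1)) by ring,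
          abs_mul r, abs_of_nonneg (a := 2 * ‖h‖^2 * q τ ^ (r-1)) (by positivity)]
        ring
      _ ≤ |r| * 2 * ‖h‖^2 * q τ ^ (r-1) + |r * (r-1)| * (4 * ‖h‖^2 * q τ * q τ ^ (r-1-1)) := by
        gcongr
      _ = (|r * (r-1)| * 4 + |r| * 2) * ‖h‖^2 * q τ ^ (r-1) := by
        rw [mul_assoc (4 * ‖h‖^2), hpe]; ring
      _ ≤ (|r * (r-1)| * 4 + |r| * 2) * ‖h‖^2 * (2 ^ |r| * (1 + ‖h‖^2) ^ ⌈|r|⌉₊ * (1 + ‖y‖^2) ^ r) := by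
        refine mul_le_mul_of_nonneg_left ((hpr.trans hpee).trans ?_) (by positivity)
        rw [Real.mul_rpow (by norm_num) (by positivity)]
        gcongr
      _ = _ := by ring


/-- The weight `(1+|y|²)^r`. -/
def wt (r : ℝ) (y : V) : ℝ := (1 + ‖y‖^2) ^ r

lemma wt_temp (r : ℝ) : (wt r).HasTemperateGrowth := by unfold wt; fun_prop

/-- Components of the gradient of the weight. -/
def gwt (r : ℝ) (e : V) (y : V) : ℝ := 2 * r * (1 + ‖y‖^2) ^ (r-1) * inner ℝ y e

lemma gwt_temp (r : ℝ) (e : V) : (gwt r e).HasTemperateGrowth := by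
  have : (inner ℝ · e : V → ℝ).HasTemperateGrowth := ((innerSL ℝ).flip e).hasTemperateGrowth
  unfold gwt; fun_prop

def ee (j : Fin 3) : V := EuclideanSpace.basisFun (Fin 3) ℝ j

lemma ee_norm (j : Fin 3) : ‖ee j‖ = 1 := (EuclideanSpace.basisFun (Fin 3) ℝ).orthonormal.1 j

lemma ee_sum (y h : V) : ∑ j, inner ℝ y (ee j) * inner ℝ h (ee j) = inner ℝ y h := by
  have := (EuclideanSpace.basisFun (Fin 3) ℝ).sum_inner_mul_inner y h
  rw [← this]
  refine Finset.sum_congr rfl fun j _ => ?_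
  rw [real_inner_comm h]; rfl

/-- Second-order Taylor remainder of the weight. -/
def rem (r : ℝ) (x h : V) : ℝ := wt r x - wt r (x - h) - ∑ j, inner ℝ h (ee j) * gwt r (ee j) (x - h)

lemma rem_bound (r : ℝ) : ∃ C ≥ 0, ∃ N : ℕ, ∀ x h : V,
    |rem r x h| ≤ C * (‖h‖^2 * (1 + ‖h‖^2)^N) * wt r (x - h) := by
  obtain ⟨C, hC, N, H⟩ := weight_taylor r
  refine ⟨C, hC, N, fun x h => ?_⟩
  have := H (x - h) h
  rw [sub_add_cancel] at this
  refine le_trans (le_of_eq ?_) this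
  unfold rem wt gwt
  congr 2
  rw [← ee_sum (x - h) h, Finset.mul_sum]
  refine Finset.sum_congr rfl fun j _ => ?_
  ring

lemma pointwise_identity {s : ℝ} (hs0 : 0 < s) (hs : s ≤ 1/2) (r : ℝ) (u : 𝓢(V, ℂ)) (x : V) :
    (kap s : ℂ) * (besselOp (2*s) (smulS (wt r) u) x - (wt r x : ℂ) * besselOp (2*s) u x)
      - ∑ j, (Real.Gamma (1-s) / (π * Complex.I) : ℂ) * bop s (ee j) (smulS (gwt r (ee j)) u) x
    = ∫ t in Set.Ioi (0:ℝ), ((t ^ (-1-s) * rexp (-t) : ℝ) : ℂ) *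
        ∫ w, ((gk w * rem r x (√t • w) : ℝ) : ℂ) * u (x - √t • w) := by
  obtain ⟨i1, e1⟩ := bessel_repr hs0 hs (smulS (wt r) u) x
  obtain ⟨i2, e2⟩ := bessel_repr hs0 hs u x
  have i3 := fun j => (bop_repr hs0 hs (smulS (gwt r (ee j)) u) x (ee j)).1
  have e3 := fun j => (bop_repr hs0 hs (smulS (gwt r (ee j)) u) x (ee j)).2
  have E := integral_sub (i1.sub (i2.const_mul (wt r x : ℂ))) (integrable_finsetSum Finset.univ fun j _ => i3 j)
  have E1 := integral_sub i1 (i2.const_mul (wt r x : ℂ))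
  have E2 := integral_finsetSum (Finset.univ : Finset (Fin 3)) fun j _ => i3 j
  rw [integral_const_mul] at E1
  simp only [e3]
  rw [mul_sub, mul_left_comm, e1, e2, ← E2, ← E1]
  refine E.symm.trans ?_
  refine setIntegral_congr_fun measurableSet_Ioi fun t ht => ?_
  simp only [Pi.sub_apply]
  have g1 := gk_mul_integrable (smulS (wt r) u) t x
  have g2 := gk_mul_integrable u t x
  have g3 := fun j => gk_inner_mul_integrable (smulS (gwt r (ee j)) u) t x (ee j)
  have g3' : ∀ j, Integrable fun w => ((gk w * inner ℝ (√t • w) (ee j) : ℝ) : ℂ) * (smulS (gwt r (ee j)) u) (x - √t • w) := by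
    intro j
    refine ((g3 j).const_mul (√t : ℂ)).congr (Filter.Eventually.of_forall fun w => ?_)
    simp only [real_inner_smul_left]; push_cast; ring
  have I1 := integral_sub ((g2.const_mul (wt r x : ℂ)).sub g1) (integrable_finsetSum Finset.univ fun j _ => g3' j)
  have I2 := integral_sub (g2.const_mul (wt r x : ℂ)) g1
  have I3 := integral_finsetSum (Finset.univ : Finset (Fin 3)) fun j _ => g3' j
  rw [integral_const_mul] at I2
  have I4 : ∫ w, ((gk w * rem r x (√t • w) : ℝ) : ℂ) * u (x - √t • w)
     = (wt r x : ℂ) * (∫ w, (gk w : ℂ) * u (x - √t • w)) - (∫ w, (gk w : ℂ) * (smulS (wt r) u) (x - √t • w))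
        - ∑ j, ∫ w, ((gk w * inner ℝ (√t • w) (ee j) : ℝ) : ℂ) * (smulS (gwt r (ee j)) u) (x - √t • w) := by
    rw [← I3, ← I2]
    refine Eq.trans ?_ I1
    refine integral_congr_ae (Filter.Eventually.of_forall fun w => ?_)
    simp only [smulS_apply (wt_temp r), smulS_apply (gwt_temp r _), Pi.sub_apply, rem]
    push_cast
    simp only [Fin.sum_univ_three]
    ring
  rw [I4, smulS_apply (wt_temp r) u x]
  push_cast
  rw [← Finset.mul_sum]
  ring


lemma dens_t_integrable {s : ℝ} (hs : s ≤ 1/2) (N : ℕ) :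
    IntegrableOn (fun t : ℝ => t ^ (-s) * rexp (-t) * (1 + t)^N) (Set.Ioi 0) := by
  have h1 : IntegrableOn (fun t : ℝ => t ^ (-s) * rexp (-(1/2 * t))) (Set.Ioi 0) := by
    by_contra hcon
    have := Real.integral_rpow_mul_exp_neg_mul_Ioi (a := 1 - s) (r := 1/2) (by linarith) (by norm_num)
    rw [show 1 - s - 1 = -s by ring, integral_undef hcon] at this
    have hG : 0 < Real.Gamma (1-s) := Real.Gamma_pos_of_pos (by linarith)
    have : 0 < ((1:ℝ) / (1/2)) ^ (1-s) * Real.Gamma (1-s) := by positivity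
    linarith
  refine (h1.const_mul (2^N * N.factorial * rexp (1/2))).mono' (by fun_prop) ?_
  refine (ae_restrict_iff' measurableSet_Ioi).2 (Filter.Eventually.of_forall fun t ht => ?_)
  have ht' : 0 < t := ht
  rw [Real.norm_of_nonneg (by positivity)]
  have h2 : (1 + t)^N ≤ 2^N * N.factorial * rexp ((1+t)/2) := by
    have := Real.pow_div_factorial_le_exp ((1 + t)/2) (by positivity) N
    rw [div_le_iff₀ (by positivity), div_pow, div_le_iff₀ (by positivity)] at this
    linarith
  calc _ ≤ t ^ (-s) * rexp (-t) * (2^N * N.factorial * rexp ((1+t)/2)) := by gcongr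
    _ = 2^N * N.factorial * t ^ (-s) * (rexp (-t) * rexp ((1+t)/2)) := by ring
    _ = 2^N * N.factorial * t ^ (-s) * (rexp (1/2) * rexp (-(1/2*t))) := by
      rw [← Real.exp_add, ← Real.exp_add]; congr 2; ring
    _ = _ := by ring

open scoped ENNReal

lemma sq_lintegral_le {P : Type*} [MeasurableSpace P] (ν : Measure P) {f : P → ℝ≥0∞} (hf : AEMeasurable f ν) :
    (∫⁻ p, f p ∂ν)^2 ≤ ν Set.univ * ∫⁻ p, f p ^ 2 ∂ν := by
  have h := ENNReal.lintegral_mul_le_Lp_mul_Lq ν (p := 2) (q := 2) Real.HolderConjugate.two_two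
    (f := fun _ => 1) (g := f) aemeasurable_const hf
  simp only [Pi.mul_apply, one_mul, ENNReal.one_rpow, lintegral_const] at h
  have h2 := pow_le_pow_left' h 2
  refine h2.trans (le_of_eq ?_)
  rw [mul_pow, ← ENNReal.rpow_natCast, ← ENNReal.rpow_natCast, ← ENNReal.rpow_mul, ← ENNReal.rpow_mul]
  norm_num

lemma schur {P : Type*} [MeasurableSpace P] (ν : Measure P) [SFinite ν] (g : P → V) (hg : Measurable g)
    (h : V → ℝ≥0∞) (hh : Measurable h) :
    ∫⁻ x, (∫⁻ p, h (x - g p) ∂ν)^2 ≤ (ν Set.univ)^2 * ∫⁻ x, h x ^ 2 := by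
  calc ∫⁻ x, (∫⁻ p, h (x - g p) ∂ν)^2
      ≤ ∫⁻ x, ν Set.univ * ∫⁻ p, h (x - g p) ^ 2 ∂ν :=
        lintegral_mono fun x => sq_lintegral_le ν (by fun_prop)
    _ = ν Set.univ * ∫⁻ x, ∫⁻ p, h (x - g p) ^ 2 ∂ν := by
        rw [lintegral_const_mul]
        exact Measurable.lintegral_prod_right' (f := fun q : V × P => h (q.1 - g q.2) ^ 2) (by fun_prop)
    _ = ν Set.univ * ∫⁻ p, (∫⁻ x : V, h (x - g p) ^ 2) ∂ν := by
        rw [lintegral_lintegral_swap]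
        have : Measurable (fun q : V × P => h (q.1 - g q.2) ^ 2) := by fun_prop
        exact this.aemeasurable
    _ = ν Set.univ * ∫⁻ p, (∫⁻ x, h x ^ 2) ∂ν := by
        congr 1
        refine lintegral_congr fun p => ?_
        exact lintegral_sub_right_eq_self (fun x => h x ^ 2) (g p)
    _ = _ := by rw [lintegral_const]; ring

lemma remainder_bound {s : ℝ} (hs : s ≤ 1/2) (r : ℝ) :
    ∃ C : ℝ≥0∞, C ≠ ⊤ ∧ ∀ u : 𝓢(V, ℂ),
      eLpNorm (fun x => ∫ t in Set.Ioi (0:ℝ), ((t ^ (-1-s) * rexp (-t) : ℝ) : ℂ) *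
        ∫ w, ((gk w * rem r x (√t • w) : ℝ) : ℂ) * u (x - √t • w)) 2 volume
      ≤ C * eLpNorm (smulS (wt r) u) 2 volume := by
  obtain ⟨C, hC, N, H⟩ := rem_bound r
  set a : ℝ → ℝ≥0∞ := fun t => ENNReal.ofReal (t ^ (-s) * rexp (-t) * (1 + t)^N) with ha
  set b : V → ℝ≥0∞ := fun w => ENNReal.ofReal (gk w * (1 + ‖w‖^2)^(N+1)) with hb
  have ham : Measurable a := by fun_prop
  have hbm : Measurable b := by have := gk_continuous; fun_prop
  set μ : Measure (ℝ × V) := (volume.restrict (Set.Ioi (0:ℝ))).prod volume with hμ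
  set ν : Measure (ℝ × V) := μ.withDensity (fun p => a p.1 * b p.2) with hν
  have hd : Measurable (fun p : ℝ × V => a p.1 * b p.2) := by fun_prop
  have hνfin : ν Set.univ ≠ ⊤ := by
    rw [hν, withDensity_apply _ MeasurableSet.univ, Measure.restrict_univ, hμ,
      lintegral_prod_mul ham.aemeasurable hbm.aemeasurable]
    exact ENNReal.mul_ne_top (dens_t_integrable hs N).lintegral_lt_top.ne (gk_moment (N+1)).lintegral_lt_top.ne
  have : IsFiniteMeasure ν := ⟨lt_top_iff_ne_top.2 hνfin⟩
  refine ⟨ENNReal.ofReal C * ν Set.univ, ENNReal.mul_ne_top ENNReal.ofReal_ne_top hνfin, fun u => ?_⟩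
  set f := smulS (wt r) u with hf
  set h : V → ℝ≥0∞ := fun y => ‖f y‖ₑ with hh
  have hhm : Measurable h := f.continuous.measurable.enorm
  have hwt0 : ∀ y, 0 ≤ wt r y := fun y => by unfold wt; positivity
  have hpt : ∀ x, ‖∫ t in Set.Ioi (0:ℝ), ((t ^ (-1-s) * rexp (-t) : ℝ) : ℂ) *
        ∫ w, ((gk w * rem r x (√t • w) : ℝ) : ℂ) * u (x - √t • w)‖ₑ ≤
        ENNReal.ofReal C * ∫⁻ p, h (x - √p.1 • p.2) ∂ν := by
    intro x
    have hm2 : Measurable (fun p : ℝ × V => h (x - √p.1 • p.2)) := by fun_prop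
    rw [hν, lintegral_withDensity_eq_lintegral_mul _ hd hm2, hμ,
      lintegral_prod _ (hd.mul hm2).aemeasurable, ← lintegral_const_mul' _ _ ENNReal.ofReal_ne_top]
    refine (enorm_integral_le_lintegral_enorm _).trans ?_
    refine setLIntegral_mono' measurableSet_Ioi fun t ht => ?_
    have ht' : 0 < t := ht
    rw [enorm_mul]
    refine (mul_le_mul_right (enorm_integral_le_lintegral_enorm _) _).trans ?_
    rw [← lintegral_const_mul' _ _ enorm_ne_top, ← lintegral_const_mul' _ _ ENNReal.ofReal_ne_top]
    refine lintegral_mono fun w => ?_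
    have hg := gk_nonneg w
    simp only [Pi.mul_apply, ha, hb, hh, hf, smulS_apply (wt_temp r)]
    simp only [← ofReal_norm]
    rw [← ENNReal.ofReal_mul (by positivity), ← ENNReal.ofReal_mul (by positivity),
      ← ENNReal.ofReal_mul (by positivity), ← ENNReal.ofReal_mul hC]
    refine ENNReal.ofReal_le_ofReal ?_
    simp only [norm_mul, Complex.norm_real]
    rw [Real.norm_of_nonneg hg, Real.norm_of_nonneg (hwt0 _), Real.norm_of_nonneg (Real.exp_pos _).le,
      Real.norm_of_nonneg (Real.rpow_nonneg ht'.le _), Real.norm_eq_abs]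
    have hr := H x (√t • w)
    have hn : ‖√t • w‖^2 = t * ‖w‖^2 := by
      rw [norm_smul, mul_pow, Real.norm_of_nonneg (Real.sqrt_nonneg t), Real.sq_sqrt ht'.le]
    rw [hn] at hr
    have e3 : t ^ (-s) = t ^ (-1-s) * t := by
      rw [← Real.rpow_add_one ht'.ne']; congr 1; ring
    have hW := hwt0 (x - √t • w)
    have hpoly : t * ‖w‖^2 * (1 + t * ‖w‖^2)^N ≤ t * ((1 + t)^N * (1 + ‖w‖^2)^(N+1)) := by
      have h1 : (1 + t * ‖w‖^2)^N ≤ ((1 + t) * (1 + ‖w‖^2))^N := by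
        gcongr
        nlinarith [sq_nonneg ‖w‖]
      calc _ ≤ t * (1 + ‖w‖^2) * ((1 + t) * (1 + ‖w‖^2))^N := by
            gcongr
            linarith
        _ = _ := by rw [mul_pow]; ring
    calc t ^ (-1-s) * rexp (-t) * (gk w * |rem r x (√t • w)| * ‖u (x - √t • w)‖)
        ≤ t ^ (-1-s) * rexp (-t) * (gk w * (C * (t * ((1 + t)^N * (1 + ‖w‖^2)^(N+1))) * wt r (x - √t • w)) * ‖u (x - √t • w)‖) := by
          refine mul_le_mul_of_nonneg_left (mul_le_mul_of_nonneg_right (mul_le_mul_of_nonneg_left (hr.trans ?_) hg) (norm_nonneg _)) (by positivity)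
          gcongr
      _ = _ := by rw [e3]; ring
  have hsch := schur ν (fun p : ℝ × V => √p.1 • p.2) (by fun_prop) h hhm
  rw [eLpNorm_eq_lintegral_rpow_enorm_toReal (by simp) (by simp),
    eLpNorm_eq_lintegral_rpow_enorm_toReal (by simp) (by simp)]
  simp only [ENNReal.toReal_ofNat, ENNReal.rpow_ofNat]
  have : ∫⁻ x, ‖∫ t in Set.Ioi (0:ℝ), ((t ^ (-1-s) * rexp (-t) : ℝ) : ℂ) *
        ∫ w, ((gk w * rem r x (√t • w) : ℝ) : ℂ) * u (x - √t • w)‖ₑ ^ 2 ≤ (ENNReal.ofReal C * ν Set.univ)^2 * ∫⁻ x, h x ^ 2 := by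
    calc _ ≤ ∫⁻ x, (ENNReal.ofReal C * ∫⁻ p, h (x - √p.1 • p.2) ∂ν)^2 :=
          lintegral_mono fun x => pow_le_pow_left' (hpt x) 2
      _ = (ENNReal.ofReal C)^2 * ∫⁻ x, (∫⁻ p, h (x - √p.1 • p.2) ∂ν)^2 := by
          simp only [mul_pow]
          rw [lintegral_const_mul' _ _ (by simp)]
      _ ≤ (ENNReal.ofReal C)^2 * ((ν Set.univ)^2 * ∫⁻ x, h x ^ 2) := by gcongr
      _ = _ := by ring
  refine (ENNReal.rpow_le_rpow this (by norm_num)).trans (le_of_eq ?_)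
  rw [ENNReal.mul_rpow_of_nonneg _ _ (by norm_num)]
  congr 1
  rw [← ENNReal.rpow_natCast, ← ENNReal.rpow_mul]
  norm_num


/-- The `L²` norm of a Schwartz function. -/
def nrm (φ : 𝓢(V, ℂ)) : ℝ := ‖SchwartzMap.toLpCLM ℂ ℂ 2 (volume : Measure V) φ‖

lemma nrm_eq (φ : 𝓢(V, ℂ)) : nrm φ = (eLpNorm φ 2 volume).toReal := by
  unfold nrm
  exact SchwartzMap.norm_toLp

lemma nrm_nonneg (φ : 𝓢(V, ℂ)) : 0 ≤ nrm φ := norm_nonneg _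

lemma l2norm_eq (φ : 𝓢(V, ℂ)) : l2norm φ = nrm φ := by
  rw [nrm_eq, (φ.memLp 2 volume).eLpNorm_eq_integral_rpow_norm (by simp) (by simp),
    ENNReal.toReal_ofReal (by positivity)]
  unfold l2norm
  simp

lemma nrm_fourier (φ : 𝓢(V, ℂ)) : nrm (𝓕 φ) = nrm φ :=
  SchwartzMap.norm_fourier_toL2_eq φ

lemma nrm_mono {φ ψ : 𝓢(V, ℂ)} {c : ℝ} (hc : 0 ≤ c) (h : ∀ x, ‖φ x‖ ≤ c * ‖ψ x‖) : nrm φ ≤ c * nrm ψ := by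
  rw [nrm_eq, nrm_eq]
  have := eLpNorm_le_mul_eLpNorm_of_ae_le_mul (μ := volume) (Filter.Eventually.of_forall h) 2
  have h2 := ENNReal.toReal_mono (ENNReal.mul_ne_top ENNReal.ofReal_ne_top (ψ.memLp 2 volume).2.ne) this
  rwa [ENNReal.toReal_mul, ENNReal.toReal_ofReal hc] at h2

lemma abs_inner_ee_le (y : V) (j : Fin 3) : |inner ℝ y (ee j)| ≤ (1 + ‖y‖^2) ^ ((1:ℝ)/2) := by
  have h := abs_real_inner_le_norm y (ee j)
  rw [ee_norm, mul_one] at h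
  rw [← Real.sqrt_eq_rpow]
  exact h.trans (Real.le_sqrt_of_sq_le (by linarith))

lemma nrm_bop {s : ℝ} (hs : s ≤ 1/2) (j : Fin 3) (φ : 𝓢(V, ℂ)) : nrm (bop s (ee j) φ) ≤ nrm φ := by
  rw [← nrm_fourier (bop s (ee j) φ), ← nrm_fourier φ, bop, FourierTransform.fourier_fourierInv_eq]
  rw [← one_mul (nrm (𝓕 φ))]
  refine nrm_mono zero_le_one fun ξ => ?_
  rw [smulS_apply (bsym_temp s (ee j)), norm_mul, Complex.norm_real, Real.norm_eq_abs, abs_mul]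
  have h1 : (1:ℝ) ≤ 1 + ‖ξ‖^2 := by nlinarith [sq_nonneg ‖ξ‖]
  gcongr
  rw [abs_of_nonneg (Real.rpow_nonneg (by linarith) _)]
  calc _ ≤ (1 + ‖ξ‖^2) ^ ((1:ℝ)/2) * (1 + ‖ξ‖^2) ^ (s-1) := by
        gcongr
        exact abs_inner_ee_le ξ j
    _ = (1 + ‖ξ‖^2) ^ (s-1/2) := by rw [← Real.rpow_add (by linarith)]; congr 1; ring
    _ ≤ 1 := Real.rpow_le_one_of_one_le_of_nonpos h1 (by linarith)

lemma nrm_gwt (r : ℝ) (j : Fin 3) (u : 𝓢(V, ℂ)) :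
    nrm (smulS (gwt r (ee j)) u) ≤ (2 * |r|) * nrm (smulS (wt r) u) := by
  refine nrm_mono (by positivity) fun y => ?_
  rw [smulS_apply (gwt_temp r (ee j)), smulS_apply (wt_temp r), norm_mul, norm_mul, Complex.norm_real,
    Complex.norm_real, ← mul_assoc]
  have h1 : (1:ℝ) ≤ 1 + ‖y‖^2 := by nlinarith [sq_nonneg ‖y‖]
  gcongr
  have h0 : ∀ a : ℝ, 0 ≤ (1 + ‖y‖^2) ^ a := fun a => Real.rpow_nonneg (by linarith) _
  rw [gwt, wt, Real.norm_eq_abs, Real.norm_eq_abs, abs_mul, abs_mul, abs_mul, abs_of_nonneg (h0 _), abs_of_nonneg (h0 _),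
    abs_two, mul_assoc]
  gcongr
  calc _ ≤ (1 + ‖y‖^2) ^ (r-1) * (1 + ‖y‖^2) ^ ((1:ℝ)/2) := by
        gcongr
        exact abs_inner_ee_le y j
    _ = (1 + ‖y‖^2) ^ (r-1/2) := by rw [← Real.rpow_add (by linarith)]; congr 1; ring
    _ ≤ _ := Real.rpow_le_rpow_of_exponent_le h1 (by linarith)

/-- The Bessel operator on Schwartz functions. -/
def bes (s : ℝ) (φ : 𝓢(V, ℂ)) : 𝓢(V, ℂ) := 𝓕⁻ (smulS (wt s) (𝓕 φ))

lemma bes_eq (s : ℝ) (φ : 𝓢(V, ℂ)) : besselOp (2*s) φ = bes s φ := by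
  rw [bes, SchwartzMap.fourierInv_coe]
  funext v
  unfold besselOp
  refine congrArg (fun F : V → ℂ => 𝓕⁻ F v) ?_
  funext ξ
  rw [smulS_apply (wt_temp s), fourier_coe', wt, show 2*s/2 = s by ring]

lemma jb_pow (m : ℝ) (v : V) : jb v ^ m = wt (m/2) v := by
  rw [jb, wt, ← Real.rpow_mul (by positivity)]
  congr 1; ring

theorem main_thm (m s : ℝ) (hs0 : 0 < s) (hs : s ≤ 1/2) :
    ∃ C > 0, ∀ u : 𝓢(V, ℂ),
      l2norm (fun v =>
          besselOp (2*s) (fun w => ((jb w ^ m : ℝ) : ℂ) * u w) v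
            - ((jb v ^ m : ℝ) : ℂ) * besselOp (2*s) (u : V → ℂ) v)
        ≤ C * l2norm (fun v => ((jb v ^ m : ℝ) : ℂ) * u v) := by
  set r := m/2 with hr
  obtain ⟨C, hC, H⟩ := remainder_bound hs r
  have hk := kap_pos hs0 hs
  set γ : ℂ := (Real.Gamma (1-s)/(π*Complex.I):ℂ) with hγ
  refine ⟨(kap s)⁻¹ * (C.toReal + ∑ _j : Fin 3, ‖γ‖ * (2 * |r|)) + 1, by positivity, fun u => ?_⟩
  have e1 : (fun v => ((jb v ^ m : ℝ) : ℂ) * u v) = ⇑(smulS (wt r) u) := by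
    funext v; rw [smulS_apply (wt_temp r), jb_pow]
  set Q : 𝓢(V, ℂ) := bes s (smulS (wt r) u) - smulS (wt r) (bes s u) with hQ
  have e2 : (fun v => besselOp (2*s) (fun w => ((jb w ^ m : ℝ) : ℂ) * u w) v
            - ((jb v ^ m : ℝ) : ℂ) * besselOp (2*s) (u : V → ℂ) v) = ⇑Q := by
    funext v
    rw [e1, bes_eq, bes_eq, jb_pow, hQ, SchwartzMap.sub_apply, smulS_apply (wt_temp r)]
  rw [e2, e1, l2norm_eq, l2norm_eq]
  set S : Fin 3 → 𝓢(V, ℂ) := fun j => bop s (ee j) (smulS (gwt r (ee j)) u) with hS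
  set R : 𝓢(V, ℂ) := (kap s : ℂ) • Q - ∑ j, γ • S j with hR
  have hRn : nrm R ≤ C.toReal * nrm (smulS (wt r) u) := by
    rw [nrm_eq, nrm_eq, ← ENNReal.toReal_mul]
    refine ENNReal.toReal_mono (ENNReal.mul_ne_top hC ((smulS (wt r) u).memLp 2 volume).2.ne) ?_
    refine le_trans (le_of_eq ?_) (H u)
    congr 1
    funext x
    rw [← pointwise_identity hs0 hs r u x, bes_eq, bes_eq, hR, hQ, SchwartzMap.sub_apply, SchwartzMap.smul_apply,
      SchwartzMap.sub_apply, smulS_apply (wt_temp r), SchwartzMap.sum_apply]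
    rfl
  have hSn : ∀ j, nrm (γ • S j) ≤ ‖γ‖ * (2 * |r|) * nrm (smulS (wt r) u) := by
    intro j
    have : nrm (γ • S j) = ‖γ‖ * nrm (S j) := by unfold nrm; rw [map_smul, norm_smul]
    rw [this, mul_assoc]
    gcongr
    exact (nrm_bop hs j _).trans (nrm_gwt r j u)
  have hQe : (kap s : ℂ) • Q = R + ∑ j, γ • S j := by rw [hR]; abel
  have hQn : kap s * nrm Q ≤ (C.toReal + ∑ _j : Fin 3, ‖γ‖ * (2 * |r|)) * nrm (smulS (wt r) u) := by
    have : nrm ((kap s : ℂ) • Q) = kap s * nrm Q := by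
      unfold nrm; rw [map_smul, norm_smul, Complex.norm_real, Real.norm_of_nonneg hk.le]
    rw [← this, hQe, add_mul, Finset.sum_mul]
    calc nrm (R + ∑ j, γ • S j) ≤ nrm R + ∑ j, nrm (γ • S j) := by
          unfold nrm
          rw [map_add, map_sum]
          exact (norm_add_le _ _).trans (add_le_add le_rfl (norm_sum_le _ _))
      _ ≤ _ := add_le_add hRn (Finset.sum_le_sum fun j _ => hSn j)
  have hf := nrm_nonneg (smulS (wt r) u)
  calc nrm Q = (kap s)⁻¹ * (kap s * nrm Q) := by field_simp
    _ ≤ (kap s)⁻¹ * ((C.toReal + ∑ _j : Fin 3, ‖γ‖ * (2 * |r|)) * nrm (smulS (wt r) u)) := by gcongr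
    _ ≤ _ := by linarith

/-- for `0 < s ≤ 1/2`,
`‖[(1-Δ)^s, ⟨·⟩^m] u‖_{L²} ≤ C ‖⟨·⟩^m u‖_{L²}` for Schwartz `u`. -/
theorem commutator_bessel_weight_low_order (m s : ℝ) (hs0 : 0 < s) (hs : s ≤ 1/2) :
    ∃ C > 0, ∀ u : 𝓢(V, ℂ),
      l2norm (fun v =>
          besselOp (2*s) (fun w => ((jb w ^ m : ℝ) : ℂ) * u w) v
            - ((jb v ^ m : ℝ) : ℂ) * besselOp (2*s) (u : V → ℂ) v)
        ≤ C * l2norm (fun v => ((jb v ^ m : ℝ) : ℂ) * u v) :=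
  main_thm m s hs0 hs
end
end
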